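/- arXiv:1508.04457 — 2 statements merged into one kernel-verified Lean document; each statement's English description precedes it below -/
import Mathlib

section
/- Let f(z) = Σ_{p odd prime} z^p. Then f(e^{−t}) ~ 1/(t·log(1/t)) as t → 0⁺; that is, the sum Σ_{p odd prime} e^{−pt}, multiplied by t·log(1/t), tends to 1 as t decreases to 0. -/
open Filter Topology Asymptotics MeasureTheory

/-- `Q2 k` is the number of Goldbach partitions of `2*k`, i.e. the number of
unordered pairs `{p, q}` of odd primes with `p + q = 2*k`. -/
def Q2 (k : ℕ) : ℕ :=
  ((Finset.range (2 * k + 1) ×ˢ Finset.range (2 * k + 1)).filter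
    (fun pq => pq.1.Prime ∧ pq.2.Prime ∧ Odd pq.1 ∧ Odd pq.2 ∧
      pq.1 ≤ pq.2 ∧ pq.1 + pq.2 = 2 * k)).card

/-- `fOdd z = Σ_{p odd prime} z^p`. -/
noncomputable def fOdd (z : ℝ) : ℝ := ∑' p : ℕ, if p.Prime ∧ Odd p then z ^ p else 0

/-- `fOdd' z = Σ_{p odd prime} p * z^(p-1)`, the derivative of `fOdd` on `(0,1)`. -/
noncomputable def fOdd' (z : ℝ) : ℝ :=
  ∑' p : ℕ, if p.Prime ∧ Odd p then (p : ℝ) * z ^ (p - 1) else 0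

/-- `fOdd'' z = Σ_{p odd prime} p * (p-1) * z^(p-2)`, the second derivative of `fOdd` on `(0,1)`. -/
noncomputable def fOdd'' (z : ℝ) : ℝ :=
  ∑' p : ℕ, if p.Prime ∧ Odd p then (p : ℝ) * ((p : ℝ) - 1) * z ^ (p - 2) else 0

/-- The prime-counting function at a real argument: the number of primes `≤ y`. -/
noncomputable def primePi (y : ℝ) : ℕ := Nat.primeCounting ⌊y⌋₊

namespace PNTAux

open ArithmeticFunction

/-- The weight `(Λ(n)+1)/n`. -/
noncomputable def wt (n : ℕ) : ℝ := (vonMangoldt n + 1) / n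

lemma wt_nonneg (n : ℕ) : 0 ≤ wt n := by
  unfold wt
  have : 0 ≤ vonMangoldt n := vonMangoldt_nonneg
  positivity

lemma summable_int_kernel : Summable (fun j : ℤ => (1 + (j : ℝ) ^ 2)⁻¹) := by
  have h1 : Summable (fun j : ℤ => 1 / (j : ℝ) ^ 2) :=
    Real.summable_one_div_int_pow.mpr (by norm_num)
  refine Summable.of_norm_bounded_eventually h1 ?_
  have : ∀ᶠ j : ℤ in cofinite, j ≠ 0 := by
    exact (Set.finite_singleton (0 : ℤ)).eventually_cofinite_notMem
  filter_upwards [this] with j hj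
  have hj' : (0 : ℝ) < (j : ℝ) ^ 2 := by positivity
  rw [Real.norm_of_nonneg (by positivity), one_div]
  exact inv_anti₀ hj' (by linarith)

lemma fiber_bound (s : Finset ℕ) (k : ℕ) :
    ∑ n ∈ s with ⌊Real.log ((n : ℕ) : ℝ)⌋₊ = k, wt n ≤ (Real.log 4 + 5) * Real.exp 1 := by
  set x : ℝ := Real.exp (k + 1) with hx
  have hx0 : 0 < x := Real.exp_pos _
  have hxk : x = Real.exp 1 * Real.exp k := by rw [hx, Real.exp_add, mul_comm]
  have hek : 0 < Real.exp (k : ℝ) := Real.exp_pos _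
  have h1 : ∑ n ∈ s with ⌊Real.log ((n : ℕ) : ℝ)⌋₊ = k, wt n ≤
      ∑ n ∈ Finset.Ioc 0 ⌊x⌋₊, (vonMangoldt n + 1) / Real.exp k := by
    have hsub : ((s.filter (fun n : ℕ => ⌊Real.log n⌋₊ = k)).filter (fun n => n ≠ 0)) ⊆
        Finset.Ioc 0 ⌊x⌋₊ := by
      intro n hn
      simp only [Finset.mem_filter] at hn
      obtain ⟨⟨_, hk⟩, hn0⟩ := hn
      have hnpos : (0 : ℝ) < n := by positivity
      rw [Finset.mem_Ioc]
      refine ⟨Nat.pos_of_ne_zero hn0, Nat.le_floor ?_⟩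
      rw [hx, ← Real.log_le_iff_le_exp hnpos]
      have := Nat.lt_floor_add_one (Real.log n)
      rw [hk] at this
      exact this.le
    have h2 : ∑ n ∈ s with ⌊Real.log ((n : ℕ) : ℝ)⌋₊ = k, wt n =
        ∑ n ∈ ((s.filter (fun n : ℕ => ⌊Real.log n⌋₊ = k)).filter (fun n => n ≠ 0)), wt n := by
      symm
      apply Finset.sum_filter_of_ne
      rintro n _ hw rfl
      simp [wt] at hw
    rw [h2]
    refine (Finset.sum_le_sum (g := fun n => (vonMangoldt n + 1) / Real.exp k) ?_).trans
      (Finset.sum_le_sum_of_subset_of_nonneg hsub ?_)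
    · intro n hn
      simp only [Finset.mem_filter] at hn
      obtain ⟨⟨_, hk⟩, hn0⟩ := hn
      have hnpos : (0 : ℝ) < n := by positivity
      have hL : 0 ≤ vonMangoldt n := vonMangoldt_nonneg
      have h3 : Real.exp k ≤ n := by
        rw [← Real.le_log_iff_exp_le hnpos, ← hk]
        exact Nat.floor_le (Real.log_natCast_nonneg n)
      unfold wt
      gcongr
    · intro n _ _
      have hL : 0 ≤ vonMangoldt n := vonMangoldt_nonneg
      positivity
  refine h1.trans ?_
  rw [← Finset.sum_div, Finset.sum_add_distrib]
  have h3 : ∑ n ∈ Finset.Ioc 0 ⌊x⌋₊, vonMangoldt n ≤ (Real.log 4 + 4) * x :=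
    Chebyshev.psi_le_const_mul_self hx0.le
  have h4 : ∑ n ∈ Finset.Ioc 0 ⌊x⌋₊, (1 : ℝ) ≤ x := by
    simp
    exact Nat.floor_le hx0.le
  rw [div_le_iff₀ hek, mul_assoc, ← hxk]
  linarith

lemma exists_weight_bound : ∃ C : ℝ, 0 < C ∧ ∀ T : ℝ,
    Summable (fun n : ℕ => wt n * (1 + (T - Real.log n) ^ 2)⁻¹) ∧
    ∑' n : ℕ, wt n * (1 + (T - Real.log n) ^ 2)⁻¹ ≤ C := by
  set B : ℝ := (Real.log 4 + 5) * Real.exp 1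
  have hB : 0 < B := by
    have : 0 < Real.log 4 := Real.log_pos (by norm_num)
    positivity
  set Z : ℝ := ∑' j : ℤ, (1 + (j : ℝ) ^ 2)⁻¹
  have hZ : 0 ≤ Z := tsum_nonneg fun j => by positivity
  have key : ∀ (T : ℝ) (s : Finset ℕ),
      ∑ n ∈ s, wt n * (1 + (T - Real.log n) ^ 2)⁻¹ ≤ 3 * B * Z := by
    intro T s
    rw [← Finset.sum_fiberwise_of_maps_to (s := s)
      (t := s.image (fun n : ℕ => ⌊Real.log n⌋₊)) (g := fun n : ℕ => ⌊Real.log n⌋₊)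
      (fun n hn => Finset.mem_image_of_mem _ hn)]
    have h1 : ∀ k ∈ s.image (fun n : ℕ => ⌊Real.log n⌋₊),
        ∑ n ∈ s with ⌊Real.log ((n : ℕ) : ℝ)⌋₊ = k, wt n * (1 + (T - Real.log n) ^ 2)⁻¹ ≤
        3 * B * (1 + ((⌊T⌋ - (k : ℤ) : ℤ) : ℝ) ^ 2)⁻¹ := by
      intro k _
      have h2 : ∑ n ∈ s with ⌊Real.log ((n : ℕ) : ℝ)⌋₊ = k, wt n * (1 + (T - Real.log n) ^ 2)⁻¹ ≤
          ∑ n ∈ s with ⌊Real.log ((n : ℕ) : ℝ)⌋₊ = k, wt n * (3 * (1 + ((⌊T⌋ - (k : ℤ) : ℤ) : ℝ) ^ 2)⁻¹) := by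
        refine Finset.sum_le_sum fun n hn => ?_
        refine mul_le_mul_of_nonneg_left ?_ (wt_nonneg n)
        simp only [Finset.mem_filter] at hn
        have hk1 : (k : ℝ) ≤ Real.log n := by
          rw [← hn.2]; exact Nat.floor_le (Real.log_natCast_nonneg n)
        have hk2 : Real.log n < k + 1 := by
          rw [← hn.2]; exact Nat.lt_floor_add_one _
        have hT1 := Int.floor_le T
        have hT2 := Int.lt_floor_add_one T
        push_cast
        set u := Real.log n
        set m : ℝ := (⌊T⌋ : ℝ)
        rw [← div_eq_mul_inv, inv_eq_one_div, div_le_div_iff₀ (by positivity) (by positivity)]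
        have h5 : (m - k - (T - u)) ^ 2 ≤ 1 := by
          rw [sq_le_one_iff_abs_le_one, abs_le]
          constructor <;> linarith
        nlinarith [sq_nonneg (m - k - 2 * (T - u))]
      refine h2.trans ?_
      rw [← Finset.sum_mul]
      have := fiber_bound s k
      have h6 : (0 : ℝ) ≤ 3 * (1 + ((⌊T⌋ - (k : ℤ) : ℤ) : ℝ) ^ 2)⁻¹ := by positivity
      calc _ ≤ B * (3 * (1 + ((⌊T⌋ - (k : ℤ) : ℤ) : ℝ) ^ 2)⁻¹) :=
            mul_le_mul_of_nonneg_right this h6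
        _ = _ := by ring
    refine (Finset.sum_le_sum h1).trans ?_
    rw [← Finset.mul_sum]
    refine mul_le_mul_of_nonneg_left ?_ (by positivity)
    have hinj : Function.Injective (fun k : ℕ => ⌊T⌋ - (k : ℤ)) := by
      intro a b hab
      simp at hab
      exact hab
    have h7 := summable_int_kernel.comp_injective hinj
    calc _ ≤ ∑' k : ℕ, (1 + ((⌊T⌋ - (k : ℤ) : ℤ) : ℝ) ^ 2)⁻¹ :=
          h7.sum_le_tsum _ (fun k _ => by positivity)
      _ ≤ Z := tsum_comp_le_tsum_of_inj summable_int_kernel (fun j => by positivity) hinj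
  refine ⟨3 * B * Z + 1, by positivity, fun T => ?_⟩
  have hnn : ∀ n : ℕ, 0 ≤ wt n * (1 + (T - Real.log n) ^ 2)⁻¹ := fun n =>
    mul_nonneg (wt_nonneg n) (by positivity)
  refine ⟨summable_of_sum_le hnn (key T), ?_⟩
  exact (Real.tsum_le_of_sum_le hnn (key T)).trans (by linarith)

/-- The kernel `h(v) = e^{-v} exp(-e^{-v})`. -/
noncomputable def hk (v : ℝ) : ℝ := Real.exp (-v) * Real.exp (-Real.exp (-v))

lemma hk_pos (v : ℝ) : 0 < hk v := by unfold hk; positivity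

lemma kernel_bound (v : ℝ) :
    (1 + v ^ 2) ^ 2 * ((Real.exp (-v) + Real.exp (-v) ^ 2) * Real.exp (-Real.exp (-v))) ≤ 5760 := by
  rcases le_total 0 v with hv | hv
  · have hy1 : Real.exp (-v) ≤ 1 := Real.exp_le_one_iff.mpr (by linarith)
    have hy0 := Real.exp_pos (-v)
    have he : Real.exp (-Real.exp (-v)) ≤ 1 := Real.exp_le_one_iff.mpr (by linarith)
    have he0 := Real.exp_pos (-Real.exp (-v))
    have h2 := Real.pow_div_factorial_le_exp v hv 2
    have h4 := Real.pow_div_factorial_le_exp v hv 4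
    have h0 := Real.one_le_exp hv
    norm_num [Nat.factorial] at h2 h4
    have h5 : (1 + v ^ 2) ^ 2 ≤ 29 * Real.exp v := by nlinarith
    calc _ ≤ (29 * Real.exp v) * ((Real.exp (-v) + Real.exp (-v)) * 1) := by
          gcongr
          nlinarith
      _ = 58 * (Real.exp v * Real.exp (-v)) := by ring
      _ = 58 := by rw [← Real.exp_add]; simp
      _ ≤ _ := by norm_num
  · set y := Real.exp (-v) with hy
    have hyv : -v ≤ y := by have := Real.add_one_le_exp (-v); linarith
    have hy1 : 1 ≤ y := Real.one_le_exp (by linarith)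
    have h6 := Real.pow_div_factorial_le_exp y (by linarith) 6
    norm_num [Nat.factorial] at h6
    have h7 : 1 + v ^ 2 ≤ 2 * y ^ 2 := by nlinarith
    have h8 : y + y ^ 2 ≤ 2 * y ^ 2 := by nlinarith
    calc _ ≤ (2 * y ^ 2) ^ 2 * ((2 * y ^ 2) * Real.exp (-y)) := by gcongr
      _ = 8 * y ^ 6 * Real.exp (-y) := by ring
      _ ≤ 8 * (720 * Real.exp y) * Real.exp (-y) := by
          gcongr; linarith
      _ = 5760 * (Real.exp y * Real.exp (-y)) := by ring
      _ = 5760 := by rw [← Real.exp_add]; simp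
      _ ≤ _ := le_rfl

lemma hk_bound (v : ℝ) : (1 + v ^ 2) ^ 2 * hk v ≤ 5760 := by
  refine le_trans ?_ (kernel_bound v)
  unfold hk
  gcongr
  have := sq_nonneg (Real.exp (-v))
  linarith

lemma hk_hasDerivAt (v : ℝ) : HasDerivAt hk
    ((-Real.exp (-v) + Real.exp (-v) ^ 2) * Real.exp (-Real.exp (-v))) v := by
  have h1 : HasDerivAt (fun v : ℝ => Real.exp (-v)) (-Real.exp (-v)) v := by
    simpa using (hasDerivAt_neg v).exp
  have h2 := h1.mul (h1.neg.exp)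
  convert! h2 using 1
  simp only [Pi.neg_apply]
  ring

lemma hk_deriv_bound (v : ℝ) : ‖deriv hk v‖ ≤ 5760 * (1 + v ^ 2)⁻¹ := by
  rw [(hk_hasDerivAt v).deriv, ← div_eq_mul_inv, le_div_iff₀ (by positivity), norm_mul,
    Real.norm_of_nonneg (Real.exp_pos (-Real.exp (-v))).le]
  have h1 : ‖-Real.exp (-v) + Real.exp (-v) ^ 2‖ ≤ Real.exp (-v) + Real.exp (-v) ^ 2 := by
    refine (norm_add_le _ _).trans ?_
    simp
  have := kernel_bound v
  have h2 : 1 + v ^ 2 ≤ (1 + v ^ 2) ^ 2 := by nlinarith [sq_nonneg v]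
  calc _ ≤ (Real.exp (-v) + Real.exp (-v) ^ 2) * Real.exp (-Real.exp (-v)) * (1 + v ^ 2) ^ 2 := by
        gcongr
    _ ≤ _ := by linarith

/-- `(1+v²) ≤ 2 (1+a²)(1+x²)` when `|x - v| ≤ |a|`. -/
lemma peetre {v x a : ℝ} (h : |x - v| ≤ |a|) :
    (1 + x ^ 2)⁻¹ ≤ 2 * (1 + a ^ 2) * (1 + v ^ 2)⁻¹ := by
  have h2 : (x - v) ^ 2 ≤ a ^ 2 := sq_le_sq.mpr h
  rw [← div_eq_mul_inv, inv_eq_one_div, div_le_div_iff₀ (by positivity) (by positivity)]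
  nlinarith [sq_nonneg (2 * x - v), mul_nonneg (sq_nonneg a) (sq_nonneg x), sq_nonneg (x + v),
    sq_nonneg (x + (x - v))]

lemma hk_sub_bound (v a : ℝ) :
    ‖hk (v - a) - hk v‖ ≤ 11520 * (|a| * (1 + a ^ 2)) * (1 + v ^ 2)⁻¹ := by
  have h := Convex.norm_image_sub_le_of_norm_deriv_le (f := hk) (s := Set.uIcc v (v - a))
    (x := v) (y := v - a) (C := 5760 * (2 * (1 + a ^ 2) * (1 + v ^ 2)⁻¹))
    (fun x _ => (hk_hasDerivAt x).differentiableAt) ?_ (convex_uIcc _ _)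
    Set.left_mem_uIcc Set.right_mem_uIcc
  · refine h.trans (le_of_eq ?_)
    simp
    ring
  · intro x hx
    refine (hk_deriv_bound x).trans ?_
    gcongr
    apply peetre
    have := Set.abs_sub_left_of_mem_uIcc hx
    simpa using this

lemma exists_F : ∃ F : ℂ → ℂ, ContinuousOn F {s | 1 ≤ s.re} ∧
    ∀ s : ℂ, 1 < s.re → F s = LSeries (fun n => ((vonMangoldt n : ℝ) : ℂ) - 1) s := by
  have hu : IsUnit (1 : ZMod 1) := isUnit_one
  set A := vonMangoldt.LFunctionResidueClassAux (q := 1) (1 : ZMod 1) with hA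
  set Zt : ℂ → ℂ := Function.update (fun s => riemannZeta s - 1 / (s - 1)) 1
    (Real.eulerMascheroniConstant : ℂ) with hZt
  have hZc : Continuous Zt := by
    rw [continuous_iff_continuousAt]
    intro s
    by_cases hs : s = 1
    · subst hs
      exact continuousAt_update_same.mpr tendsto_riemannZeta_sub_one_div
    · rw [hZt, continuousAt_update_of_ne hs]
      refine ((differentiableAt_riemannZeta hs).continuousAt).sub ?_
      refine continuousAt_const.div (by fun_prop) (sub_ne_zero.mpr hs)
  refine ⟨fun s => A s - Zt s,
    (vonMangoldt.continuousOn_LFunctionResidueClassAux (q := 1) 1).sub hZc.continuousOn, ?_⟩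
  intro s hs
  have h1 := vonMangoldt.eqOn_LFunctionResidueClassAux (q := 1) hu hs
  have hs1 : s ≠ 1 := by rintro rfl; simp at hs
  have h2 : Zt s = riemannZeta s - 1 / (s - 1) := by
    rw [hZt, Function.update_of_ne hs1]
  have h3 : (fun n : ℕ => ((vonMangoldt.residueClass (1 : ZMod 1) n : ℝ) : ℂ)) =
      fun n => ((vonMangoldt n : ℝ) : ℂ) := by
    ext n
    rw [vonMangoldt.residueClass, Set.indicator_of_mem]
    exact Subsingleton.elim _ _
  have h4 : LSeries (fun n => ((vonMangoldt n : ℝ) : ℂ) - 1) s =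
      LSeries (fun n => ((vonMangoldt n : ℝ) : ℂ)) s - LSeries 1 s :=
    LSeries_sub (LSeriesSummable_vonMangoldt hs) (LSeriesSummable_one_iff.mpr hs)
  change A s - Zt s = _
  rw [h4, LSeries_one_eq_riemannZeta hs, h2, hA, h1]
  simp only [h3, Nat.totient_one]
  simp

end PNTAux
namespace PNTAux

open ArithmeticFunction
open scoped FourierTransform

/-- The Dirichlet series term `(Λ(n)-1)/n^s`. -/
noncomputable def co (n : ℕ) (s : ℂ) : ℂ := (((vonMangoldt n : ℝ) : ℂ) - 1) / (n : ℂ) ^ s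

lemma co_term (n : ℕ) {s : ℂ} (hs : s ≠ 0) :
    LSeries.term (fun n => ((vonMangoldt n : ℝ) : ℂ) - 1) s n = co n s := by
  rw [LSeries.term_def, co]
  split_ifs with h
  · subst h; simp [Complex.zero_cpow hs]
  · rfl

lemma norm_co_le (n : ℕ) {ε : ℝ} (hε : 0 ≤ ε) : ‖co n (1 + ε)‖ ≤ wt n := by
  rcases Nat.eq_zero_or_pos n with rfl | hn
  · have : (1 + (ε : ℂ)) ≠ 0 := by
      intro h
      have := congrArg Complex.re h
      simp at this
      linarith
    simp [co, wt, Complex.zero_cpow this]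
  · have hn1 : (1 : ℝ) ≤ n := by exact_mod_cast hn
    have hL : 0 ≤ vonMangoldt n := vonMangoldt_nonneg
    rw [co, wt, norm_div, Complex.norm_natCast_cpow_of_pos hn]
    have h1 : ‖((vonMangoldt n : ℝ) : ℂ) - 1‖ ≤ vonMangoldt n + 1 := by
      refine (norm_sub_le _ _).trans ?_
      simp [abs_of_nonneg hL]
    have h2 : (n : ℝ) ≤ (n : ℝ) ^ ((1 : ℂ) + ε).re := by
      simp only [Complex.add_re, Complex.one_re, Complex.ofReal_re]
      exact Real.self_le_rpow_of_one_le hn1 (by linarith)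
    gcongr

lemma scale_kernel {R : ℝ} (hR : 0 < R) (v : ℝ) :
    (1 + (R * v) ^ 2)⁻¹ ≤ (1 + (R ^ 2)⁻¹) * (1 + v ^ 2)⁻¹ := by
  rw [← div_eq_mul_inv, inv_eq_one_div, div_le_div_iff₀ (by positivity) (by positivity)]
  have h1 : (1 + (R ^ 2)⁻¹) * (1 + (R * v) ^ 2) = 1 + R ^ 2 * v ^ 2 + (R ^ 2)⁻¹ + v ^ 2 := by
    field_simp
    ring
  rw [h1]
  have : 0 < (R ^ 2)⁻¹ := by positivity
  nlinarith [mul_nonneg (sq_nonneg R) (sq_nonneg v)]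

lemma term_rewrite (g : ℝ → ℂ) (R T ε ξ : ℝ) (hε : 0 < ε) (n : ℕ) :
    co n (1 + ε) * (Real.fourierChar (-(ξ * (R * (T - Real.log n)))) • g ξ) =
    Real.fourierChar (-(ξ * (R * T))) •
      (g ξ * co n (1 + ε - (2 * Real.pi * R * ξ : ℝ) * Complex.I)) := by
  rcases Nat.eq_zero_or_pos n with rfl | hn
  · have h1 : (1 + (ε : ℂ)) ≠ 0 := by
      intro h
      have := congrArg Complex.re h
      simp at this
      linarith
    have h2 : (1 + (ε : ℂ) - (2 * Real.pi * R * ξ : ℝ) * Complex.I) ≠ 0 := by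
      intro h
      have := congrArg Complex.re h
      simp at this
      linarith
    simp only [co, Nat.cast_zero, Complex.zero_cpow h1, Complex.zero_cpow h2]
    simp
  · have hn0 : (n : ℂ) ≠ 0 := by exact_mod_cast hn.ne'
    rw [Circle.smul_def, Circle.smul_def, Real.fourierChar_apply, Real.fourierChar_apply, co, co,
      Complex.cpow_sub _ _ hn0]
    rw [Complex.cpow_def_of_ne_zero hn0 ((2 * Real.pi * R * ξ : ℝ) * Complex.I)]
    have h3 : Complex.exp (((2 * Real.pi * -(ξ * (R * (T - Real.log n))) : ℝ) : ℂ) * Complex.I) =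
        Complex.exp (((2 * Real.pi * -(ξ * (R * T)) : ℝ) : ℂ) * Complex.I) *
        Complex.exp (Complex.log n * ((2 * Real.pi * R * ξ : ℝ) * Complex.I)) := by
      rw [← Complex.exp_add, ← Complex.natCast_log]
      congr 1
      push_cast
      ring
    rw [h3]
    simp only [smul_eq_mul]
    have h4 : (n : ℂ) ^ (1 + (ε : ℂ)) ≠ 0 := by
      simp [Complex.cpow_eq_zero_iff, hn0]
    field_simp

lemma co_tendsto (n : ℕ) :
    Tendsto (fun ε : ℝ => co n (1 + ε)) (𝓝[>] 0) (𝓝 (co n 1)) := by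
  rcases Nat.eq_zero_or_pos n with rfl | hn
  · refine Tendsto.congr' ?_ tendsto_const_nhds
    filter_upwards [self_mem_nhdsWithin] with ε hε
    have hε : 0 < ε := hε
    have h1 : (1 + (ε : ℂ)) ≠ 0 := by
      intro h
      have := congrArg Complex.re h
      simp at this
      linarith
    simp [co, Complex.zero_cpow h1]
  · have hn0 : (n : ℂ) ≠ 0 := by exact_mod_cast hn.ne'
    have hc : Continuous (fun ε : ℝ => co n (1 + ε)) := by
      unfold co
      refine continuous_const.div ?_ ?_
      · refine Continuous.const_cpow (by fun_prop) (Or.inl hn0)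
      · intro x; simp [Complex.cpow_eq_zero_iff, hn0]
    have := hc.tendsto 0
    simp only [Complex.ofReal_zero, add_zero] at this
    exact this.mono_left nhdsWithin_le_nhds

lemma S_summable {δ : ℝ → ℂ} {D R : ℝ} (hD0 : 0 ≤ D) (hD : ∀ v, ‖δ v‖ ≤ D * (1 + v ^ 2)⁻¹)
    (hR : 0 < R) (T : ℝ) (n : ℕ) {ε : ℝ} (hε : 0 ≤ ε) :
    ‖co n (1 + ε) * δ (R * (T - Real.log n))‖ ≤
      (D * (1 + (R ^ 2)⁻¹)) * (wt n * (1 + (T - Real.log n) ^ 2)⁻¹) := by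
  rw [norm_mul]
  calc _ ≤ wt n * (D * ((1 + (R ^ 2)⁻¹) * (1 + (T - Real.log n) ^ 2)⁻¹)) := by
        refine mul_le_mul (norm_co_le n hε) ((hD _).trans ?_) (norm_nonneg _) (wt_nonneg n)
        exact mul_le_mul_of_nonneg_left (scale_kernel hR _) hD0
    _ = _ := by ring

lemma S_tendsto (g : ℝ → ℂ) (hg : Continuous g) (hgc : HasCompactSupport g) {D : ℝ}
    (hD0 : 0 ≤ D) (hD : ∀ v, ‖𝓕 g v‖ ≤ D * (1 + v ^ 2)⁻¹) {R : ℝ} (hR : 0 < R) :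
    Tendsto (fun T : ℝ => ∑' n : ℕ, co n 1 * 𝓕 g (R * (T - Real.log n))) atTop (𝓝 0) := by
  obtain ⟨F, hFc, hF⟩ := exists_F
  obtain ⟨C, hC, hW⟩ := exists_weight_bound
  have hgi : Integrable g := hg.integrable_of_hasCompactSupport hgc
  -- the point on the vertical line
  let pt : ℝ → ℝ → ℂ := fun ε ξ => 1 + (max ε 0 : ℝ) - (2 * Real.pi * R * ξ : ℝ) * Complex.I
  have hpt_re : ∀ ε ξ, (pt ε ξ).re = 1 + max ε 0 := by
    intro ε ξ; simp [pt]
  have hptc : Continuous (fun p : ℝ × ℝ => pt p.1 p.2) := by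
    simp only [pt]; fun_prop
  have hFpt : Continuous (fun p : ℝ × ℝ => F (pt p.1 p.2)) := by
    refine hFc.comp_continuous hptc ?_
    intro p
    have := le_max_right p.1 0
    simp only [Set.mem_ofPred_eq, hpt_re]
    linarith
  let E : ℝ → ℝ → ℂ := fun ε T =>
    ∫ ξ, Real.fourierChar (-(ξ * (R * T))) • (g ξ * F (pt ε ξ))
  have hA : ∀ ε T : ℝ, 0 < ε →
      ∑' n : ℕ, co n (1 + ε) * 𝓕 g (R * (T - Real.log n)) = E ε T := by
    intro ε T hε
    have hmax : max ε 0 = ε := max_eq_left hε.le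
    have hsumm : Summable (fun n : ℕ => co n (1 + ε)) := by
      have h1 : LSeriesSummable (fun n => ((vonMangoldt n : ℝ) : ℂ) - 1) (1 + ε) :=
        LSeriesSummable.sub (LSeriesSummable_vonMangoldt (by simpa using hε))
          (LSeriesSummable_one_iff.mpr (by simpa using hε))
      refine h1.congr fun n => ?_
      rw [co_term]
      intro h
      have := congrArg Complex.re h
      simp at this
      linarith
    have h2 := hasSum_integral_of_summable_integral_norm (μ := volume)
      (F := fun (n : ℕ) (ξ : ℝ) =>
        co n (1 + ε) * (Real.fourierChar (-(ξ * (R * (T - Real.log n)))) • g ξ)) ?_ ?_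
    · have h3 := h2.tsum_eq
      have h4 : ∀ n : ℕ, ∫ ξ : ℝ, co n (1 + ε) *
          (Real.fourierChar (-(ξ * (R * (T - Real.log n)))) • g ξ) =
          co n (1 + ε) * 𝓕 g (R * (T - Real.log n)) := by
        intro n
        rw [integral_const_mul, Real.fourier_real_eq]
      simp only [h4] at h3
      rw [h3]
      refine integral_congr_ae (Eventually.of_forall fun ξ => ?_)
      simp only [term_rewrite g R T ε ξ hε]
      simp only [Circle.smul_def, smul_eq_mul]
      rw [tsum_mul_left, tsum_mul_left]
      congr 2
      have hre : 1 < (pt ε ξ).re := by rw [hpt_re, hmax]; linarith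
      rw [hF _ hre, LSeries]
      refine tsum_congr fun n => ?_
      rw [co_term]
      · simp only [pt, hmax]
      · intro h
        rw [h] at hre
        simp at hre
        linarith
    · intro n
      refine Integrable.const_mul ?_ _
      have := (Real.fourierIntegral_convergent_iff (μ := volume) (R * (T - Real.log n))).2 hgi
      simpa [mul_comm] using this
    · have h5 : ∀ n : ℕ, ∫ ξ : ℝ, ‖co n (1 + ε) *
          (Real.fourierChar (-(ξ * (R * (T - Real.log n)))) • g ξ)‖ =
          ‖co n (1 + ε)‖ * ∫ ξ : ℝ, ‖g ξ‖ := by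
        intro n
        rw [← integral_const_mul]
        refine integral_congr_ae (Eventually.of_forall fun ξ => ?_)
        simp [Circle.norm_smul]
      simp only [h5]
      exact hsumm.norm.mul_right _
  have hB : ∀ T, Continuous (fun ε => E ε T) := by
    intro T
    have hcont : Continuous (Function.uncurry (fun (ε ξ : ℝ) =>
        Real.fourierChar (-(ξ * (R * T))) • (g ξ * F (pt ε ξ)))) := by
      simp only [Function.uncurry_def, Circle.smul_def, Real.fourierChar_apply, smul_eq_mul]
      refine Continuous.mul (by fun_prop) (Continuous.mul (by fun_prop) hFpt)
    have h1 := continuous_parametric_integral_of_continuous (μ := volume) hcont hgc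
    refine h1.congr fun ε => ?_
    refine setIntegral_eq_integral_of_forall_compl_eq_zero fun ξ hξ => ?_
    rw [image_eq_zero_of_notMem_tsupport hξ]
    simp
  have hS : ∀ T : ℝ, ∑' n : ℕ, co n 1 * 𝓕 g (R * (T - Real.log n)) = E 0 T := by
    intro T
    have h1 : Tendsto (fun ε : ℝ => ∑' n : ℕ, co n (1 + ε) * 𝓕 g (R * (T - Real.log n)))
        (𝓝[>] 0) (𝓝 (∑' n : ℕ, co n 1 * 𝓕 g (R * (T - Real.log n)))) := by
      refine tendsto_tsum_of_dominated_convergence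
        ((hW T).1.mul_left (D * (1 + (R ^ 2)⁻¹))) ?_ ?_
      · intro n
        exact (co_tendsto n).mul_const _
      · filter_upwards [self_mem_nhdsWithin] with ε hε n
        exact S_summable hD0 hD hR T n (le_of_lt hε)
    have h2 : Tendsto (fun ε : ℝ => E ε T) (𝓝[>] 0) (𝓝 (E 0 T)) :=
      ((hB T).tendsto 0).mono_left nhdsWithin_le_nhds
    refine tendsto_nhds_unique h1 (h2.congr' ?_)
    filter_upwards [self_mem_nhdsWithin] with ε hε
    exact (hA ε T hε).symm
  simp only [hS]
  have hRL := Real.tendsto_integral_exp_smul_cocompact (fun ξ => g ξ * F (pt 0 ξ))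
  have h3 : Tendsto (fun T : ℝ => R * T) atTop (cocompact ℝ) :=
    (tendsto_id.const_mul_atTop hR).mono_right atTop_le_cocompact
  exact hRL.comp h3

/-- A band-limited approximate identity. -/
lemma exists_delta : ∃ g : ℝ → ℂ, Continuous g ∧ HasCompactSupport g ∧ Continuous (𝓕 g) ∧
    (∃ D : ℝ, 0 ≤ D ∧ ∀ v, ‖𝓕 g v‖ ≤ D * (1 + v ^ 2)⁻¹) ∧ Integrable (𝓕 g) ∧
    Integrable (fun v : ℝ => (|v| * (1 + v ^ 2)) * ‖𝓕 g v‖) ∧ ∫ v, 𝓕 g v = 1 := by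
  let b : ContDiffBump (0 : ℝ) := ⟨1, 2, by norm_num, by norm_num⟩
  let g0 : ℝ → ℂ := fun x => (b x : ℂ)
  have hcs : HasCompactSupport g0 :=
    HasCompactSupport.comp_left (f := fun x : ℝ => b x) (g := fun y : ℝ => (y : ℂ))
      b.hasCompactSupport Complex.ofReal_zero
  have hsm : ContDiff ℝ (⊤ : ℕ∞) g0 := Complex.ofRealCLM.contDiff.comp b.contDiff
  let G : SchwartzMap ℝ ℂ := hcs.toSchwartzMap hsm
  have hG : (G : ℝ → ℂ) = g0 := rfl
  have hFG : 𝓕 g0 = ((𝓕 G : SchwartzMap ℝ ℂ) : ℝ → ℂ) := by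
    rw [SchwartzMap.fourier_coe, hG]
  refine ⟨g0, hsm.continuous, hcs, ?_, ?_, ?_, ?_, ?_⟩
  · rw [hFG]; exact (𝓕 G).continuous
  · obtain ⟨C0, hC0⟩ := (𝓕 G).decay 0 0
    obtain ⟨C2, hC2⟩ := (𝓕 G).decay 2 0
    refine ⟨C0 + C2, by linarith [hC0.1, hC2.1], fun v => ?_⟩
    rw [hFG, ← div_eq_mul_inv, le_div_iff₀ (by positivity)]
    have h0 := hC0.2 v
    have h2 := hC2.2 v
    simp at h0 h2
    linarith
  · rw [hFG]; exact (𝓕 G).integrable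
  · rw [hFG]
    have h1 := (𝓕 G).integrable_pow_mul volume 1
    have h3 := (𝓕 G).integrable_pow_mul volume 3
    refine (h1.add h3).congr (Eventually.of_forall fun v => ?_)
    simp only [Pi.add_apply, Real.norm_eq_abs]
    rw [← sq_abs v]
    ring
  · have h1 : 𝓕⁻ (𝓕 g0) = g0 :=
      Continuous.fourierInv_fourier_eq hsm.continuous (hsm.continuous.integrable_of_hasCompactSupport hcs)
        (by rw [hFG]; exact (𝓕 G).integrable)
    have h2 := congrFun h1 0
    rw [Real.fourierInv_eq'] at h2
    simp at h2
    rw [h2]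
    have : b 0 = 1 := b.one_of_mem_closedBall (by simp [b])
    simp [g0, this]

end PNTAux
namespace PNTAux

open ArithmeticFunction
open scoped FourierTransform

lemma hk_continuous : Continuous hk := by unfold hk; fun_prop

lemma hk_le (v : ℝ) : hk v ≤ 5760 * (1 + v ^ 2)⁻¹ * (1 + v ^ 2)⁻¹ := by
  have := hk_bound v
  have h : 0 < 1 + v ^ 2 := by positivity
  rw [← div_eq_mul_inv, ← div_eq_mul_inv, le_div_iff₀ h, le_div_iff₀ h]
  linarith

lemma hk_le_const (v : ℝ) : hk v ≤ 5760 := by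
  have := hk_bound v
  have h := hk_pos v
  nlinarith [sq_nonneg v, mul_nonneg h.le (sq_nonneg v), mul_nonneg h.le (sq_nonneg (v ^ 2))]

lemma hk_le_one (v : ℝ) : hk v ≤ 5760 * (1 + v ^ 2)⁻¹ := by
  refine (hk_le v).trans ?_
  have : (1 + v ^ 2)⁻¹ ≤ 1 := inv_le_one_of_one_le₀ (by nlinarith [sq_nonneg v])
  have h0 : 0 < (1 + v ^ 2)⁻¹ := by positivity
  nlinarith

lemma hk_integrable : Integrable hk := by
  refine (integrable_inv_one_add_sq.const_mul 5760).mono' hk_continuous.aestronglyMeasurable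
    (Eventually.of_forall fun v => ?_)
  rw [Real.norm_of_nonneg (hk_pos v).le]
  exact hk_le_one v

/-- Smoothed kernel. -/
noncomputable def cv (δ : ℝ → ℂ) (R v : ℝ) : ℂ := ∫ x, (hk x : ℂ) * (R * δ (R * (v - x)))

lemma cv_eq (δ : ℝ → ℂ) {R : ℝ} (hR : 0 < R) (v : ℝ) :
    cv δ R v = ∫ w, (hk (v - w / R) : ℂ) * δ w := by
  let φ : ℝ → ℂ := fun w => (hk (v - w / R) : ℂ) * δ w
  have h1 : ∫ x, φ (R * (v - x)) = ∫ y, φ (R * y) :=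
    integral_sub_left_eq_self (fun y => φ (R * y)) volume v
  rw [Measure.integral_comp_mul_left] at h1
  have h2 : cv δ R v = R * ∫ x, φ (R * (v - x)) := by
    rw [cv, ← integral_const_mul]
    refine integral_congr_ae (Eventually.of_forall fun x => ?_)
    have : v - R * (v - x) / R = x := by field_simp; ring
    simp only [φ, this]
    ring
  rw [h2, h1, abs_of_pos (inv_pos.mpr hR), Complex.real_smul, ← mul_assoc, ← Complex.ofReal_mul,
    mul_inv_cancel₀ hR.ne']
  simp [φ]

lemma cv_sub_bound {δ : ℝ → ℂ} (hδc : Continuous δ) (hδi : Integrable δ)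
    (hδ2 : Integrable (fun v : ℝ => (|v| * (1 + v ^ 2)) * ‖δ v‖)) (hδ1 : ∫ v, δ v = 1)
    {R : ℝ} (hR : 1 ≤ R) (v : ℝ) :
    ‖(hk v : ℂ) - cv δ R v‖ ≤
      (11520 * (∫ w, (|w| * (1 + w ^ 2)) * ‖δ w‖) / R) * (1 + v ^ 2)⁻¹ := by
  have hR0 : 0 < R := by linarith
  have hi1 : Integrable (fun w => (hk (v - w / R) : ℂ) * δ w) := by
    refine hδi.bdd_mul (c := 5760) ?_ (Eventually.of_forall fun w => ?_)
    · have := hk_continuous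
      exact Continuous.aestronglyMeasurable (by fun_prop)
    · rw [Complex.norm_real, Real.norm_of_nonneg (hk_pos _).le]
      exact hk_le_const _
  have h1 : (hk v : ℂ) - cv δ R v = -∫ w, ((hk (v - w / R) - hk v : ℝ) : ℂ) * δ w := by
    have h2 : ∫ w, ((hk (v - w / R) - hk v : ℝ) : ℂ) * δ w =
        (∫ w, (hk (v - w / R) : ℂ) * δ w) - ∫ w, (hk v : ℂ) * δ w := by
      rw [← integral_sub hi1 (hδi.const_mul _)]
      refine integral_congr_ae (Eventually.of_forall fun w => ?_)
      push_cast
      ring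
    rw [h2, integral_const_mul, hδ1, cv_eq δ hR0]
    ring
  rw [h1, norm_neg]
  have h3 : (11520 * (∫ w, (|w| * (1 + w ^ 2)) * ‖δ w‖) / R) * (1 + v ^ 2)⁻¹ =
      ∫ w, (11520 / R * (1 + v ^ 2)⁻¹) * ((|w| * (1 + w ^ 2)) * ‖δ w‖) := by
    rw [integral_const_mul]; ring
  rw [h3]
  refine norm_integral_le_of_norm_le (hδ2.const_mul _) (Eventually.of_forall fun w => ?_)
  rw [norm_mul, Complex.norm_real]
  have h4 := hk_sub_bound v (w / R)
  have h5 : |w / R| * (1 + (w / R) ^ 2) ≤ (|w| * (1 + w ^ 2)) / R := by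
    rw [abs_div, abs_of_pos hR0, div_mul_eq_mul_div]
    have h6 : (w / R) ^ 2 ≤ w ^ 2 := by
      rw [div_pow]
      exact div_le_self (sq_nonneg w) (one_le_pow₀ hR)
    gcongr
  calc _ ≤ 11520 * ((|w| * (1 + w ^ 2)) / R) * (1 + v ^ 2)⁻¹ * ‖δ w‖ := by
        refine mul_le_mul_of_nonneg_right (h4.trans ?_) (norm_nonneg _)
        gcongr
    _ = _ := by ring

lemma cv_tendsto (g : ℝ → ℂ) (hg : Continuous g) (hgc : HasCompactSupport g)
    (hδc : Continuous (𝓕 g)) {D : ℝ}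
    (hD0 : 0 ≤ D) (hD : ∀ v, ‖𝓕 g v‖ ≤ D * (1 + v ^ 2)⁻¹) {R : ℝ} (hR : 0 < R) :
    Tendsto (fun T : ℝ => ∑' n : ℕ, co n 1 * cv (𝓕 g) R (T - Real.log n)) atTop (𝓝 0) := by
  obtain ⟨C, hC, hW⟩ := exists_weight_bound
  have hST := S_tendsto g hg hgc hD0 hD hR
  set δ := 𝓕 g with hδ
  set S : ℝ → ℂ := fun T => ∑' n : ℕ, co n 1 * δ (R * (T - Real.log n)) with hS
  have hco : ∀ (T : ℝ) (n : ℕ), ‖co n 1 * δ (R * (T - Real.log n))‖ ≤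
      (D * (1 + (R ^ 2)⁻¹)) * (wt n * (1 + (T - Real.log n) ^ 2)⁻¹) := by
    intro T n
    have := S_summable hD0 hD hR T n (le_refl 0)
    simpa using this
  have hsum : ∀ T, Summable (fun n : ℕ => co n 1 * δ (R * (T - Real.log n))) := fun T =>
    Summable.of_norm_bounded ((hW T).1.mul_left _) (hco T)
  set K : ℝ := D * (1 + (R ^ 2)⁻¹) with hK
  have hK0 : 0 ≤ K := by positivity
  have hSb : ∀ T, ‖S T‖ ≤ K * C := by
    intro T
    refine (tsum_of_norm_bounded ((hW T).1.mul_left K).hasSum (hco T)).trans ?_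
    rw [tsum_mul_left]
    exact mul_le_mul_of_nonneg_left (hW T).2 hK0
  have hSm : Measurable S := by
    refine measurable_of_tendsto_metrizable (f := fun (N : ℕ) (T : ℝ) =>
      ∑ n ∈ Finset.range N, co n 1 * δ (R * (T - Real.log n))) ?_ ?_
    · intro N
      exact Continuous.measurable (by fun_prop)
    · rw [tendsto_pi_nhds]
      intro T
      exact (hsum T).hasSum.tendsto_sum_nat
  have hswap : ∀ T, ∑' n : ℕ, co n 1 * cv δ R (T - Real.log n) =
      ∫ x, (hk x : ℂ) * (R * S (T - x)) := by
    intro T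
    have hbd : ∀ (n : ℕ) (x : ℝ),
        ‖co n 1 * ((hk x : ℂ) * (R * δ (R * (T - Real.log n - x))))‖ ≤
        (11520 * R * K * (wt n * (1 + (T - Real.log n) ^ 2)⁻¹)) * (1 + x ^ 2)⁻¹ := by
      intro n x
      have h1 := hco (T - x) n
      have h2 : T - x - Real.log n = T - Real.log n - x := by ring
      rw [h2] at h1
      have h3 : (1 + (T - Real.log n - x) ^ 2)⁻¹ ≤
          2 * (1 + x ^ 2) * (1 + (T - Real.log n) ^ 2)⁻¹ := by
        apply peetre
        simp
      have h4 : ‖co n 1 * ((hk x : ℂ) * (R * δ (R * (T - Real.log n - x))))‖ =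
          hk x * R * ‖co n 1 * δ (R * (T - Real.log n - x))‖ := by
        simp only [norm_mul, Complex.norm_real, Real.norm_of_nonneg (hk_pos x).le,
          Real.norm_of_nonneg hR.le]
        ring
      rw [h4]
      have hw := wt_nonneg n
      have hx : 0 < 1 + x ^ 2 := by positivity
      calc _ ≤ (5760 * (1 + x ^ 2)⁻¹ * (1 + x ^ 2)⁻¹) * R *
            (K * (wt n * (2 * (1 + x ^ 2) * (1 + (T - Real.log n) ^ 2)⁻¹))) := by
            refine mul_le_mul (mul_le_mul_of_nonneg_right (hk_le x) hR.le) (h1.trans ?_)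
              (norm_nonneg _) (by positivity)
            gcongr
        _ = _ := by field_simp; ring
    have hint : ∀ n : ℕ, Integrable (fun x : ℝ =>
        co n 1 * ((hk x : ℂ) * (R * δ (R * (T - Real.log n - x))))) := by
      intro n
      have := hk_continuous
      exact (integrable_inv_one_add_sq.const_mul _).mono'
        (Continuous.aestronglyMeasurable (by fun_prop)) (Eventually.of_forall (hbd n))
    have h2 := hasSum_integral_of_summable_integral_norm (μ := volume)
      (F := fun (n : ℕ) (x : ℝ) =>
        co n 1 * ((hk x : ℂ) * (R * δ (R * (T - Real.log n - x))))) hint ?_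
    · have h3 := h2.tsum_eq
      simp only [integral_const_mul] at h3
      change ∑' n : ℕ, co n 1 * cv δ R (T - Real.log n) = _ at h3
      rw [h3]
      refine integral_congr_ae (Eventually.of_forall fun x => ?_)
      simp only [hS, ← tsum_mul_left]
      refine tsum_congr fun n => ?_
      have h2 : T - x - Real.log n = T - Real.log n - x := by ring
      rw [h2]
      ring
    · refine Summable.of_nonneg_of_le (fun n => integral_nonneg fun x => norm_nonneg _)
        (fun n => integral_mono (hint n).norm (integrable_inv_one_add_sq.const_mul _) (hbd n)) ?_
      simp only [integral_const_mul]
      exact (((hW T).1.mul_left _).mul_right _)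
  simp only [hswap]
  have h0 : (0 : ℂ) = ∫ x : ℝ, (0 : ℂ) := by simp
  rw [h0]
  refine tendsto_integral_filter_of_dominated_convergence (fun x => hk x * (R * (K * C)))
    (Eventually.of_forall fun T => ?_) (Eventually.of_forall fun T => Eventually.of_forall fun x => ?_)
    (hk_integrable.mul_const _) (Eventually.of_forall fun x => ?_)
  · have := hk_continuous
    refine Measurable.aestronglyMeasurable ?_
    have h1 : Measurable (fun x => S (T - x)) := hSm.comp (by fun_prop)
    have h2 : Measurable (fun x => (hk x : ℂ)) := Continuous.measurable (by fun_prop)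
    exact h2.mul (h1.const_mul _)
  · rw [norm_mul, norm_mul, Complex.norm_real, Complex.norm_real,
      Real.norm_of_nonneg (hk_pos x).le, Real.norm_of_nonneg hR.le]
    have := hSb (T - x)
    have := (hk_pos x).le
    gcongr
  · have h1 : Tendsto (fun T : ℝ => T - x) atTop atTop := tendsto_atTop_add_const_right _ (-x) tendsto_id
    have := ((hST.comp h1).const_mul (R : ℂ)).const_mul (hk x : ℂ)
    simpa using this

lemma norm_co_one_le (n : ℕ) : ‖co n 1‖ ≤ wt n := by
  have := norm_co_le n (le_refl 0)
  simpa using this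

lemma H_tendsto :
    Tendsto (fun T : ℝ => ∑' n : ℕ, co n 1 * (hk (T - Real.log n) : ℂ)) atTop (𝓝 0) := by
  obtain ⟨C, hC, hW⟩ := exists_weight_bound
  obtain ⟨g, hg, hgc, hδc, ⟨D, hD0, hD⟩, hδi, hδ2, hδ1⟩ := exists_delta
  set M : ℝ := 11520 * (∫ w, (|w| * (1 + w ^ 2)) * ‖𝓕 g w‖) with hM
  have hM0 : 0 ≤ M := by
    have : 0 ≤ ∫ w, (|w| * (1 + w ^ 2)) * ‖𝓕 g w‖ := integral_nonneg fun w => by positivity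
    positivity
  rw [Metric.tendsto_atTop']
  intro η hη
  set R : ℝ := 2 * M * C / η + 1 with hR
  have hR1 : 1 ≤ R := by
    have : 0 ≤ 2 * M * C / η := by positivity
    linarith
  have hR0 : 0 < R := by linarith
  have hMR : M / R * C < η / 2 := by
    rw [div_mul_eq_mul_div, div_lt_iff₀ hR0, hR]
    field_simp
    linarith
  obtain ⟨T0, hT0⟩ := (Metric.tendsto_atTop'.mp
    (cv_tendsto g hg hgc hδc hD0 hD hR0)) (η / 2) (by positivity)
  refine ⟨T0, fun T hT => ?_⟩
  have h1 := hT0 T hT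
  rw [dist_zero_right] at h1 ⊢
  have hb : ∀ n : ℕ, ‖co n 1 * ((hk (T - Real.log n) : ℂ) - cv (𝓕 g) R (T - Real.log n))‖ ≤
      M / R * (wt n * (1 + (T - Real.log n) ^ 2)⁻¹) := by
    intro n
    rw [norm_mul]
    calc _ ≤ wt n * (M / R * (1 + (T - Real.log n) ^ 2)⁻¹) :=
          mul_le_mul (norm_co_one_le n) (cv_sub_bound hδc hδi hδ2 hδ1 hR1 _) (norm_nonneg _)
            (wt_nonneg n)
      _ = _ := by ring
  have hs1 : Summable (fun n : ℕ =>
      co n 1 * ((hk (T - Real.log n) : ℂ) - cv (𝓕 g) R (T - Real.log n))) :=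
    Summable.of_norm_bounded ((hW T).1.mul_left _) hb
  have hs2 : Summable (fun n : ℕ => co n 1 * (hk (T - Real.log n) : ℂ)) := by
    refine Summable.of_norm_bounded ((hW T).1.mul_left 5760) fun n => ?_
    rw [norm_mul, Complex.norm_real, Real.norm_of_nonneg (hk_pos _).le]
    calc _ ≤ wt n * (5760 * (1 + (T - Real.log n) ^ 2)⁻¹) :=
          mul_le_mul (norm_co_one_le n) (hk_le_one _) (hk_pos _).le (wt_nonneg n)
      _ = _ := by ring
  have hs3 : Summable (fun n : ℕ => co n 1 * cv (𝓕 g) R (T - Real.log n)) := by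
    refine (hs2.sub hs1).congr fun n => ?_
    ring
  have h2 : ∑' n : ℕ, co n 1 * (hk (T - Real.log n) : ℂ) =
      ∑' n : ℕ, co n 1 * ((hk (T - Real.log n) : ℂ) - cv (𝓕 g) R (T - Real.log n)) +
      ∑' n : ℕ, co n 1 * cv (𝓕 g) R (T - Real.log n) := by
    rw [← hs1.tsum_add hs3]
    refine tsum_congr fun n => ?_
    ring
  rw [h2]
  have h3 := tsum_of_norm_bounded ((hW T).1.mul_left (M / R)).hasSum hb
  rw [tsum_mul_left] at h3
  have h4 : M / R * ∑' n : ℕ, wt n * (1 + (T - Real.log n) ^ 2)⁻¹ ≤ M / R * C :=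
    mul_le_mul_of_nonneg_left (hW T).2 (by positivity)
  refine (norm_add_le _ _).trans_lt ?_
  linarith

end PNTAux
namespace PNTAux

open ArithmeticFunction

lemma exp_neg_sub_log {n : ℕ} (hn : n ≠ 0) (T : ℝ) :
    Real.exp (-(T - Real.log n)) = n * Real.exp (-T) := by
  have hn' : (0 : ℝ) < n := by positivity
  rw [neg_sub, sub_eq_add_neg, Real.exp_add, Real.exp_log hn']

lemma inv_mul_hk (n : ℕ) (T : ℝ) :
    (1 / (n : ℝ)) * hk (T - Real.log n) =
      if n = 0 then 0 else Real.exp (-T) * Real.exp (-Real.exp (-T)) ^ n := by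
  split_ifs with h
  · simp [h]
  · have hn' : (n : ℝ) ≠ 0 := by exact_mod_cast h
    rw [hk, exp_neg_sub_log h, ← Real.exp_nat_mul]
    field_simp

lemma hk_tendsto (n : ℕ) : Tendsto (fun T : ℝ => hk (T - Real.log n)) atTop (𝓝 0) := by
  have h1 : Tendsto (fun T : ℝ => T - Real.log n) atTop atTop :=
    tendsto_atTop_add_const_right _ (-Real.log n) tendsto_id
  refine Tendsto.comp (g := hk) ?_ h1
  refine squeeze_zero (fun v => (hk_pos v).le) (fun v => ?_) Real.tendsto_exp_neg_atTop_nhds_zero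
  unfold hk
  refine mul_le_of_le_one_right (Real.exp_pos _).le (Real.exp_le_one_iff.mpr ?_)
  have := Real.exp_pos (-v)
  linarith

lemma summable_inv (T : ℝ) : Summable (fun n : ℕ => (1 / (n : ℝ)) * hk (T - Real.log n)) := by
  obtain ⟨C, hC, hW⟩ := exists_weight_bound
  refine Summable.of_norm_bounded ((hW T).1.mul_left 5760) fun n => ?_
  have hL : 0 ≤ vonMangoldt n := vonMangoldt_nonneg
  have h1 : 1 / (n : ℝ) ≤ wt n := by
    unfold wt; gcongr; linarith
  rw [Real.norm_of_nonneg (mul_nonneg (by positivity) (hk_pos _).le)]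
  calc _ ≤ wt n * (5760 * (1 + (T - Real.log n) ^ 2)⁻¹) :=
        mul_le_mul h1 (hk_le_one _) (hk_pos _).le (wt_nonneg n)
    _ = _ := by ring

lemma summable_vm (T : ℝ) :
    Summable (fun n : ℕ => (vonMangoldt n / (n : ℝ)) * hk (T - Real.log n)) := by
  obtain ⟨C, hC, hW⟩ := exists_weight_bound
  refine Summable.of_norm_bounded ((hW T).1.mul_left 5760) fun n => ?_
  have hL : 0 ≤ vonMangoldt n := vonMangoldt_nonneg
  have h1 : vonMangoldt n / (n : ℝ) ≤ wt n := by
    unfold wt; gcongr; linarith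
  rw [Real.norm_of_nonneg (mul_nonneg (by positivity) (hk_pos _).le)]
  calc _ ≤ wt n * (5760 * (1 + (T - Real.log n) ^ 2)⁻¹) :=
        mul_le_mul h1 (hk_le_one _) (hk_pos _).le (wt_nonneg n)
    _ = _ := by ring

lemma tendsto_t : Tendsto (fun t : ℝ => t * (1 / (1 - Real.exp (-t)) - 1)) (𝓝[>] 0) (𝓝 1) := by
  have h1 : HasDerivAt (fun t : ℝ => -Real.exp (-t)) 1 0 := by
    have := ((hasDerivAt_neg (0 : ℝ)).exp).neg
    convert! this using 1
    simp
  have h2 := h1.tendsto_slope_zero_right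
  have h3 : Tendsto (fun t : ℝ => t / (1 - Real.exp (-t))) (𝓝[>] 0) (𝓝 1) := by
    have := h2.inv₀ one_ne_zero
    rw [inv_one] at this
    refine this.congr fun t => ?_
    simp
    rw [div_eq_mul_inv, mul_comm]
    congr 2
    ring
  have h4 : Tendsto (fun t : ℝ => t) (𝓝[>] 0) (𝓝 0) := tendsto_id.mono_left nhdsWithin_le_nhds
  have := h3.sub h4
  rw [sub_zero] at this
  refine this.congr fun t => ?_
  ring

lemma tendsto_exp_neg_gt : Tendsto (fun T : ℝ => Real.exp (-T)) atTop (𝓝[>] 0) :=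
  tendsto_nhdsWithin_iff.mpr ⟨Real.tendsto_exp_neg_atTop_nhds_zero,
    Eventually.of_forall fun T => Real.exp_pos _⟩

lemma A1 : Tendsto (fun T : ℝ => ∑' n : ℕ, (1 / (n : ℝ)) * hk (T - Real.log n))
    atTop (𝓝 1) := by
  refine (tendsto_t.comp tendsto_exp_neg_gt).congr fun T => ?_
  set t := Real.exp (-T) with ht
  have ht0 : 0 < t := Real.exp_pos _
  set r := Real.exp (-t) with hr
  have hr0 : 0 ≤ r := (Real.exp_pos _).le
  have hr1 : r < 1 := by
    rw [hr, ← Real.exp_zero]; exact Real.exp_lt_exp.mpr (by linarith)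
  simp only [Function.comp_apply, inv_mul_hk]
  have h1 : Summable (fun n : ℕ => t * r ^ n) := (summable_geometric_of_lt_one hr0 hr1).mul_left t
  have h2 : ∀ n : ℕ, (if n = 0 then 0 else t * r ^ n) = t * r ^ n - (if n = 0 then t else 0) := by
    intro n
    split_ifs with h <;> simp [h]
  simp only [← ht, ← hr, h2]
  rw [h1.tsum_sub (summable_of_hasFiniteSupport ((Set.finite_singleton 0).subset (by
    intro n hn
    by_contra h
    simp at h
    simp [h] at hn)))]
  rw [tsum_mul_left, tsum_geometric_of_lt_one hr0 hr1, tsum_ite_eq]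
  ring

lemma A0 : Tendsto (fun T : ℝ => ∑' n : ℕ, (vonMangoldt n / (n : ℝ)) * hk (T - Real.log n))
    atTop (𝓝 1) := by
  have h1 := (Complex.continuous_re.tendsto 0).comp H_tendsto
  have h2 := h1.add A1
  rw [Complex.zero_re, zero_add] at h2
  refine h2.congr fun T => ?_
  have h3 : ∀ n : ℕ, co n 1 * (hk (T - Real.log n) : ℂ) =
      (((vonMangoldt n / (n : ℝ)) * hk (T - Real.log n) -
        (1 / (n : ℝ)) * hk (T - Real.log n) : ℝ) : ℂ) := by
    intro n
    rw [co, Complex.cpow_one]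
    push_cast
    ring
  simp only [Function.comp_apply, h3]
  rw [← Complex.ofReal_tsum, Complex.ofReal_re, (summable_vm T).tsum_sub (summable_inv T)]
  ring

lemma A2 : Tendsto (fun T : ℝ => ∑' n : ℕ,
    ((if n.Prime ∧ Odd n then 0 else vonMangoldt n) / (n : ℝ)) * hk (T - Real.log n))
    atTop (𝓝 0) := by
  have hs : Summable fun n : ℕ => (if n.Prime ∧ Odd n then 0 else vonMangoldt n) / (n : ℝ) := by
    refine Summable.of_norm_bounded_eventually
      (vonMangoldt.summable_residueClass_non_primes_div (q := 1) 1) ?_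
    filter_upwards [(Set.finite_singleton (2 : ℕ)).eventually_cofinite_notMem] with n hn
    have h3 : vonMangoldt.residueClass (1 : ZMod 1) n = vonMangoldt n := by
      rw [vonMangoldt.residueClass, Set.indicator_of_mem]
      exact Subsingleton.elim _ _
    rw [h3]
    have hL : 0 ≤ vonMangoldt n := vonMangoldt_nonneg
    by_cases hp : n.Prime
    · have ho : Odd n := hp.odd_of_ne_two hn
      simp [hp, ho]
    · simp only [hp, false_and, if_false]
      rw [Real.norm_of_nonneg (by positivity)]
  have := tendsto_tsum_of_dominated_convergence (𝓕 := atTop)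
    (f := fun (T : ℝ) (n : ℕ) =>
      ((if n.Prime ∧ Odd n then 0 else vonMangoldt n) / (n : ℝ)) * hk (T - Real.log n))
    (g := fun _ => 0) (hs.norm.mul_right 5760) ?_ ?_
  · simpa using this
  · intro n
    simpa using (hk_tendsto n).const_mul
      ((if n.Prime ∧ Odd n then 0 else vonMangoldt n) / (n : ℝ))
  · refine Eventually.of_forall fun T n => ?_
    rw [norm_mul, Real.norm_of_nonneg (hk_pos _).le]
    exact mul_le_mul_of_nonneg_left (hk_le_const _) (norm_nonneg _)

lemma A3 : Tendsto (fun T : ℝ => ∑' n : ℕ,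
    ((if n.Prime ∧ Odd n then Real.log n else 0) / (n : ℝ)) * hk (T - Real.log n))
    atTop (𝓝 1) := by
  have h := A0.sub A2
  rw [sub_zero] at h
  refine h.congr fun T => ?_
  have hle : ∀ n : ℕ, ‖((if n.Prime ∧ Odd n then 0 else vonMangoldt n) / (n : ℝ)) *
      hk (T - Real.log n)‖ ≤ (vonMangoldt n / (n : ℝ)) * hk (T - Real.log n) := by
    intro n
    have hL : 0 ≤ vonMangoldt n := vonMangoldt_nonneg
    have := (hk_pos (T - Real.log n)).le
    split_ifs
    · simp; positivity
    · rw [Real.norm_of_nonneg (by positivity)]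
  rw [← (summable_vm T).tsum_sub (Summable.of_norm_bounded (summable_vm T) hle)]
  refine tsum_congr fun n => ?_
  split_ifs with hp
  · rw [vonMangoldt_apply_prime hp.1]; simp
  · simp

lemma A5 : Tendsto (fun T : ℝ => ∑' n : ℕ,
    ((if n.Prime ∧ Odd n then 1 else 0) / (n : ℝ)) *
      ((T - Real.log n) * hk (T - Real.log n))) atTop (𝓝 0) ∧
    ∀ T : ℝ, 0 < T → Summable (fun n : ℕ => ((if n.Prime ∧ Odd n then 1 else 0) / (n : ℝ)) *
      ((T - Real.log n) * hk (T - Real.log n))) := by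
  obtain ⟨C, hC, hW⟩ := exists_weight_bound
  have hb : ∀ T : ℝ, 0 < T → ∀ n : ℕ, ‖((if n.Prime ∧ Odd n then 1 else 0) / (n : ℝ)) *
      ((T - Real.log n) * hk (T - Real.log n))‖ ≤
      (2 * 5760 / T) * (wt n * (1 + (T - Real.log n) ^ 2)⁻¹) := by
    intro T hT n
    have hw := wt_nonneg n
    split_ifs with hp
    swap
    · simp; positivity
    have hL : vonMangoldt n = Real.log n := vonMangoldt_apply_prime hp.1
    have hlog : 0 ≤ Real.log n := Real.log_natCast_nonneg n
    have hn : (0 : ℝ) < n := by exact_mod_cast hp.1.pos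
    set v := T - Real.log n with hv
    have hk0 := (hk_pos v).le
    have hkb := hk_le v
    have hq : 0 < 1 + v ^ 2 := by positivity
    have h1 : (1 + v ^ 2) * hk v ≤ 5760 * (1 + v ^ 2)⁻¹ := by
      calc _ ≤ (1 + v ^ 2) * (5760 * (1 + v ^ 2)⁻¹ * (1 + v ^ 2)⁻¹) := by gcongr
        _ = _ := by field_simp
    rw [norm_mul, norm_mul, Real.norm_of_nonneg hk0, Real.norm_of_nonneg (by positivity : 0 ≤ 1 / (n : ℝ)),
      Real.norm_eq_abs]
    have h2 : |v| ≤ (2 / T) * (vonMangoldt n + 1) * (1 + v ^ 2) := by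
      rw [hL, div_mul_eq_mul_div, div_mul_eq_mul_div, le_div_iff₀ hT]
      rcases le_total (T / 2) (Real.log n) with h | h
      · have h3 : |v| ≤ 1 + v ^ 2 := by
          rw [← sq_abs v]; nlinarith [sq_nonneg (|v| - 1), abs_nonneg v]
        nlinarith [abs_nonneg v]
      · have h3 : T / 2 ≤ v := by linarith
        rw [abs_of_nonneg (by linarith)]
        nlinarith [mul_nonneg hlog hq.le]
    calc 1 / (n : ℝ) * (|v| * hk v)
        ≤ 1 / (n : ℝ) * (((2 / T) * (vonMangoldt n + 1) * (1 + v ^ 2)) * hk v) := by gcongr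
      _ = (2 / T) * wt n * ((1 + v ^ 2) * hk v) := by unfold wt; ring
      _ ≤ (2 / T) * wt n * (5760 * (1 + v ^ 2)⁻¹) := by gcongr
      _ = _ := by ring
  refine ⟨?_, fun T hT => Summable.of_norm_bounded ((hW T).1.mul_left _) (hb T hT)⟩
  have hlim : Tendsto (fun T : ℝ => (2 * 5760 * C) / T) atTop (𝓝 0) :=
    tendsto_const_nhds.div_atTop tendsto_id
  refine squeeze_zero_norm' ?_ hlim
  filter_upwards [eventually_gt_atTop 0] with T hT
  refine (tsum_of_norm_bounded ((hW T).1.mul_left _).hasSum (hb T hT)).trans ?_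
  rw [tsum_mul_left]
  calc _ ≤ (2 * 5760 / T) * C := mul_le_mul_of_nonneg_left (hW T).2 (by positivity)
    _ = _ := by ring

lemma final : Tendsto (fun T : ℝ => fOdd (Real.exp (-Real.exp (-T))) * (Real.exp (-T) * T))
    atTop (𝓝 1) := by
  have h := A3.add A5.1
  rw [add_zero] at h
  refine h.congr' ?_
  filter_upwards [eventually_gt_atTop 0] with T hT
  have hle : ∀ n : ℕ, ‖((if n.Prime ∧ Odd n then Real.log n else 0) / (n : ℝ)) *
      hk (T - Real.log n)‖ ≤ (vonMangoldt n / (n : ℝ)) * hk (T - Real.log n) := by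
    intro n
    have hL : 0 ≤ vonMangoldt n := vonMangoldt_nonneg
    have := (hk_pos (T - Real.log n)).le
    split_ifs with hp
    · rw [vonMangoldt_apply_prime hp.1] at hL ⊢
      rw [Real.norm_of_nonneg (by positivity)]
    · simp; positivity
  rw [← (Summable.of_norm_bounded (summable_vm T) hle).tsum_add (A5.2 T hT), fOdd, ← tsum_mul_right]
  refine tsum_congr fun n => ?_
  split_ifs with hp
  · have h1 := inv_mul_hk n T
    rw [if_neg hp.1.ne_zero] at h1
    have h2 : Real.log n / (n : ℝ) * hk (T - Real.log n) +
        1 / (n : ℝ) * ((T - Real.log n) * hk (T - Real.log n)) =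
        T * (1 / (n : ℝ) * hk (T - Real.log n)) := by ring
    rw [h2, h1]
    ring
  · simp

end PNTAux

/-- `f(e^{−t}) ~ 1/(t·log(1/t))` as `t → 0⁺`. -/
theorem fOdd_exp_asymptotic :
    Tendsto (fun t : ℝ => fOdd (Real.exp (-t)) * (t * Real.log (1 / t)))
      (𝓝[>] 0) (𝓝 1) := by
  have h1 : Tendsto (fun t : ℝ => Real.log (1 / t)) (𝓝[>] 0) atTop := by
    simp only [one_div, Real.log_inv]
    exact tendsto_neg_atBot_atTop.comp Real.tendsto_log_nhdsGT_zero
  refine (PNTAux.final.comp h1).congr' ?_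
  filter_upwards [self_mem_nhdsWithin] with t ht
  have ht : 0 < t := ht
  have h2 : Real.exp (-Real.log (1 / t)) = t := by
    rw [one_div, Real.log_inv, neg_neg, Real.exp_log ht]
  simp only [Function.comp_apply, h2]
end

section
/- Let π(y) denote the number of primes not exceeding y, and for t > 0 set I(t) = t·∫₀^∞ y·e^{−yt}·π(y) dy. Then I(t) ~ 2/(t²·log(1/t)) as t → 0⁺. -/
open Filter Topology Asymptotics MeasureTheory

/-- `I(t) = t·∫₀^∞ y·e^{−yt}·π(y) dy`. -/
noncomputable def Ifun (t : ℝ) : ℝ :=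
  t * ∫ y in Set.Ioi (0 : ℝ), y * Real.exp (-(y * t)) * (primePi y : ℝ)


open scoped FourierTransform SchwartzMap

lemma exists_kernel : ∃ φ K : 𝓢(ℝ, ℂ), HasCompactSupport (φ : ℝ → ℂ) ∧
    (∀ w : ℝ, K w = ∫ ξ : ℝ, Complex.exp (((-2 * Real.pi * ξ * w : ℝ) : ℂ) * Complex.I) * φ ξ) ∧
    ∫ w, K w = 1 := by
  let f : ContDiffBump (0 : ℝ) := ⟨1, 2, by norm_num, by norm_num⟩
  have h1 : HasCompactSupport (fun x : ℝ => ((f x : ℝ) : ℂ)) :=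
    f.hasCompactSupport.comp_left (g := fun x : ℝ => (x : ℂ)) (by simp)
  have h2 : ContDiff ℝ (⊤ : ℕ∞) (fun x : ℝ => ((f x : ℝ) : ℂ)) :=
    Complex.ofRealCLM.contDiff.comp f.contDiff
  let φ : 𝓢(ℝ, ℂ) := h1.toSchwartzMap h2
  have hφ : ∀ x, φ x = ((f x : ℝ) : ℂ) := fun x => rfl
  refine ⟨φ, 𝓕 φ, h1, fun w => ?_, ?_⟩
  · rw [SchwartzMap.fourier_coe, Real.fourier_real_eq_integral_exp_smul]
    simp only [smul_eq_mul]
  · have h3 : (𝓕⁻ (𝓕 φ)) 0 = φ 0 := by simp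
    rw [SchwartzMap.fourierInv_coe, Real.fourierInv_eq'] at h3
    simp at h3
    rw [h3, hφ, f.one_of_mem_closedBall]
    · simp
    · simp [f]

lemma laplace_integrable {b : ℝ → ℂ} {C : ℝ} (hbm : Measurable b) (hbC : ∀ u, ‖b u‖ ≤ C)
    (hb0 : ∀ u < 0, b u = 0) {σ : ℝ} (hσ : 0 < σ) :
    Integrable (fun u : ℝ => b u * Complex.exp (-(σ : ℂ) * u)) := by
  have h1 : IntegrableOn (fun u : ℝ => C * Real.exp (-σ * u)) (Set.Ioi 0) :=
    (integrableOn_exp_mul_Ioi (by linarith) 0).const_mul C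
  have h2 : IntegrableOn (fun u : ℝ => b u * Complex.exp (-(σ : ℂ) * u)) (Set.Ioi 0) := by
    refine Integrable.mono' h1 (by fun_prop) (Eventually.of_forall fun u => ?_)
    rw [norm_mul, Complex.norm_exp]
    simp only [Complex.mul_re, Complex.neg_re, Complex.ofReal_re, Complex.neg_im, Complex.ofReal_im]
    rw [show -σ * u - -0 * 0 = -σ * u by ring]
    exact mul_le_mul_of_nonneg_right (hbC u) (Real.exp_pos _).le
  have h3 : IntegrableOn (fun u : ℝ => b u * Complex.exp (-(σ : ℂ) * u)) (Set.Iio 0) := by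
    refine (integrableOn_zero).congr_fun (fun u hu => ?_) measurableSet_Iio
    simp [hb0 u hu]
  rw [← integrableOn_univ, ← Set.Iio_union_Ici (a := (0:ℝ))]
  exact h3.union ((integrableOn_Ici_iff_integrableOn_Ioi).mpr h2)

lemma band_limit {b : ℝ → ℂ} {C : ℝ} {B : ℂ → ℂ} (hbm : Measurable b) (hbC : ∀ u, ‖b u‖ ≤ C)
    (hb0 : ∀ u < 0, b u = 0) (hBc : ContinuousOn B {z | 0 ≤ z.re})
    (hB : ∀ z : ℂ, 0 < z.re → ∫ u : ℝ, b u * Complex.exp (-z * u) = B z)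
    {φ K : 𝓢(ℝ, ℂ)} (hφ : HasCompactSupport (φ : ℝ → ℂ))
    (hK : ∀ w : ℝ, K w =
      ∫ ξ : ℝ, Complex.exp (((-2 * Real.pi * ξ * w : ℝ) : ℂ) * Complex.I) * φ ξ) :
    Tendsto (fun x : ℝ => ∫ u : ℝ, K (u - x) * b u) atTop (𝓝 0) := by
  have hφi : Integrable (φ : ℝ → ℂ) := φ.integrable
  have hKi : Integrable (K : ℝ → ℂ) := K.integrable
  -- the identity for positive sigma
  have key : ∀ x σ : ℝ, 0 < σ → ∫ u : ℝ, K (u - x) * (b u * Complex.exp (-(σ : ℂ) * u)) =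
      ∫ ξ : ℝ, Complex.exp (((2 * Real.pi * ξ * x : ℝ) : ℂ) * Complex.I) *
        (φ ξ * B (σ + 2 * Real.pi * ξ * Complex.I)) := by
    intro x σ hσ
    have e1 : ∀ u : ℝ, K (u - x) * (b u * Complex.exp (-(σ : ℂ) * u)) =
        ∫ ξ : ℝ, (b u * Complex.exp (-(σ : ℂ) * u)) * φ ξ *
          Complex.exp (((-2 * Real.pi * ξ * (u - x) : ℝ) : ℂ) * Complex.I) := by
      intro u
      rw [hK, mul_comm, ← integral_const_mul]
      congr 1; ext ξ; ring
    simp_rw [e1]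
    rw [integral_integral_swap]
    · congr 1; ext ξ
      rw [← hB _ (by simp [hσ]), ← mul_assoc, ← integral_const_mul]
      congr 1; ext u
      have : Complex.exp (-(σ + 2 * Real.pi * ξ * Complex.I) * u) *
          Complex.exp (((2 * Real.pi * ξ * x : ℝ) : ℂ) * Complex.I)
        = Complex.exp (-(σ : ℂ) * u) *
          Complex.exp (((-2 * Real.pi * ξ * (u - x) : ℝ) : ℂ) * Complex.I) := by
        rw [← Complex.exp_add, ← Complex.exp_add]
        congr 1; push_cast; ring
      linear_combination (-(b u * φ ξ)) * this
    · have h := (laplace_integrable hbm hbC hb0 hσ).mul_prod hφi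
      refine h.mono (h.aestronglyMeasurable.mul
        (Continuous.aestronglyMeasurable (f := fun p : ℝ × ℝ =>
          Complex.exp (((-2 * Real.pi * p.2 * (p.1 - x) : ℝ) : ℂ) * Complex.I)) (by fun_prop)))
        (Eventually.of_forall fun p => ?_)
      simp only [Function.uncurry]
      rw [norm_mul, Complex.norm_exp_ofReal_mul_I, mul_one]
  have hcont : ∀ σ : ℝ, 0 ≤ σ →
      Continuous (fun ξ : ℝ => B (σ + 2 * Real.pi * ξ * Complex.I)) := by
    intro σ hσ
    refine hBc.comp_continuous (by fun_prop) (fun ξ => ?_)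
    simp [hσ]
  -- the limit as sigma tends to zero
  have key0 : ∀ x : ℝ, ∫ u : ℝ, K (u - x) * b u =
      ∫ ξ : ℝ, Complex.exp (((2 * Real.pi * ξ * x : ℝ) : ℂ) * Complex.I) *
        (φ ξ * B (2 * Real.pi * ξ * Complex.I)) := by
    intro x
    have hl : Tendsto (fun σ : ℝ => ∫ u : ℝ, K (u - x) * (b u * Complex.exp (-(σ : ℂ) * u)))
        (𝓝[>] 0) (𝓝 (∫ u : ℝ, K (u - x) * b u)) := by
      refine tendsto_integral_filter_of_dominated_convergence (fun u => ‖K (u - x)‖ * C) ?_ ?_ ?_ ?_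
      · refine Eventually.of_forall fun σ => ?_
        have : Measurable fun u : ℝ => K (u - x) :=
          (K.continuous.comp (continuous_id.sub continuous_const)).measurable
        fun_prop
      · filter_upwards [self_mem_nhdsWithin] with σ hσ
        refine Eventually.of_forall fun u => ?_
        rw [norm_mul]
        refine mul_le_mul_of_nonneg_left ?_ (norm_nonneg _)
        rcases lt_or_ge u 0 with hu | hu
        · rw [hb0 u hu]
          simpa using (norm_nonneg _).trans (hbC u)
        · rw [norm_mul, Complex.norm_exp]
          refine (mul_le_of_le_one_right (norm_nonneg _) ?_).trans (hbC u)
          rw [Real.exp_le_one_iff]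
          simp
          have : (0:ℝ) < σ := hσ
          positivity
      · exact (hKi.comp_sub_right x).norm.mul_const C
      · refine Eventually.of_forall fun u => ?_
        have : Continuous fun σ : ℝ => K (u - x) * (b u * Complex.exp (-(σ : ℂ) * u)) := by
          fun_prop
        have h := (this.tendsto 0).mono_left (nhdsWithin_le_nhds (s := Set.Ioi 0))
        simpa using h
    obtain ⟨M, hM⟩ := (isCompact_Icc (a := (0:ℝ)) (b := 1)).prod hφ |>.exists_bound_of_continuousOn
      (f := fun p : ℝ × ℝ => B (p.1 + 2 * Real.pi * p.2 * Complex.I))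
      (hBc.comp (by fun_prop) (fun p hp => by simpa using hp.1.1))
    have hr : Tendsto (fun σ : ℝ =>
        ∫ ξ : ℝ, Complex.exp (((2 * Real.pi * ξ * x : ℝ) : ℂ) * Complex.I) *
        (φ ξ * B (σ + 2 * Real.pi * ξ * Complex.I)))
        (𝓝[>] 0) (𝓝 (∫ ξ : ℝ, Complex.exp (((2 * Real.pi * ξ * x : ℝ) : ℂ) * Complex.I) *
        (φ ξ * B (2 * Real.pi * ξ * Complex.I)))) := by
      refine tendsto_integral_filter_of_dominated_convergence (fun ξ => ‖φ ξ‖ * M) ?_ ?_ ?_ ?_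
      · filter_upwards [self_mem_nhdsWithin] with σ hσ
        have h1 := hcont σ (le_of_lt hσ)
        have h2 := φ.continuous
        exact (Continuous.mul (by fun_prop) (h2.mul h1)).aestronglyMeasurable
      · filter_upwards [self_mem_nhdsWithin, nhdsWithin_le_nhds (Iio_mem_nhds (zero_lt_one' ℝ))]
          with σ hσ hσ1
        refine Eventually.of_forall fun ξ => ?_
        rw [norm_mul, norm_mul, Complex.norm_exp_ofReal_mul_I, one_mul]
        by_cases h0 : φ ξ = 0
        · simp [h0]
        · refine mul_le_mul_of_nonneg_left ?_ (norm_nonneg _)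
          exact hM (σ, ξ) ⟨⟨le_of_lt hσ, le_of_lt hσ1⟩, subset_tsupport _ h0⟩
      · exact hφi.norm.mul_const M
      · refine Eventually.of_forall fun ξ => ?_
        refine tendsto_const_nhds.mul (tendsto_const_nhds.mul ?_)
        have h1 : ContinuousWithinAt (fun σ : ℝ => B (σ + 2 * Real.pi * ξ * Complex.I))
            (Set.Ici 0) 0 := by
          refine ContinuousOn.continuousWithinAt (hBc.comp (by fun_prop) (fun σ hσ => ?_))
            (Set.self_mem_Ici)
          simpa using hσ
        have h2 := h1.tendsto.mono_left (nhdsWithin_mono 0 Set.Ioi_subset_Ici_self)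
        simpa using h2
    refine tendsto_nhds_unique hl (hr.congr' ?_)
    filter_upwards [self_mem_nhdsWithin] with σ hσ
    exact (key x σ hσ).symm
  simp_rw [key0]
  have hRL := Real.tendsto_integral_exp_smul_cocompact
    (fun ξ : ℝ => φ ξ * B (2 * Real.pi * ξ * Complex.I))
  have hneg : Tendsto (fun x : ℝ => -x) atTop (cocompact ℝ) :=
    tendsto_neg_atTop_atBot.mono_right atBot_le_cocompact
  refine (hRL.comp hneg).congr (fun x => ?_)
  simp only [Function.comp, Circle.smul_def, Real.fourierChar_apply, smul_eq_mul]
  congr 1; ext ξ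
  congr 3; push_cast; ring

theorem wiener_conv {b : ℝ → ℂ} {C : ℝ} {B : ℂ → ℂ} (hbm : Measurable b) (hbC : ∀ u, ‖b u‖ ≤ C)
    (hb0 : ∀ u < 0, b u = 0) (hBc : ContinuousOn B {z | 0 ≤ z.re})
    (hB : ∀ z : ℂ, 0 < z.re → ∫ u : ℝ, b u * Complex.exp (-z * u) = B z)
    {k : ℝ → ℂ} (hk : Integrable k) {L : ℝ}
    (hL : ∀ h : ℝ, 0 ≤ h → ∫ v, ‖k (v + h) - k v‖ ≤ L * h) :
    Tendsto (fun x : ℝ => ∫ v : ℝ, k v * b (x - v)) atTop (𝓝 0) := by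
  obtain ⟨φ, K, hφ, hK, hK1⟩ := exists_kernel
  have hKi : Integrable (K : ℝ → ℂ) := K.integrable
  have hC0 : 0 ≤ C := (norm_nonneg _).trans (hbC 0)
  set f : ℝ → ℂ := fun x => ∫ v : ℝ, k v * b (x - v) with hf
  have hint : ∀ {k : ℝ → ℂ}, Integrable k → ∀ x : ℝ, Integrable (fun v => k v * b (x - v)) := by
    intro k hk x
    exact hk.mul_bdd (c := C) (Measurable.aestronglyMeasurable (by fun_prop)) (Eventually.of_forall fun v => hbC _)
  have hlip1 : ∀ x h : ℝ, 0 ≤ h → ‖f (x + h) - f x‖ ≤ C * L * h := by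
    intro x h hh
    have e1 : f (x + h) = ∫ v, k (v + h) * b (x - v) := by
      simp only [hf]
      rw [← integral_add_right_eq_self (fun v => k v * b (x + h - v)) h]
      congr 1; ext v; congr 2; ring
    have hkh := hk.comp_add_right h
    rw [e1, ← integral_sub (hint hkh x) (hint hk x)]
    calc _ ≤ ∫ v, ‖k (v + h) - k v‖ * C := by
          refine norm_integral_le_of_norm_le ((hkh.sub hk).norm.mul_const C)
            (Eventually.of_forall fun v => ?_)
          rw [← sub_mul, norm_mul]
          exact mul_le_mul_of_nonneg_left (hbC _) (norm_nonneg _)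
      _ = C * ∫ v, ‖k (v + h) - k v‖ := by rw [integral_mul_const, mul_comm]
      _ ≤ C * (L * h) := mul_le_mul_of_nonneg_left (hL h hh) hC0
      _ = _ := by ring
  have hlip : ∀ x h : ℝ, ‖f x - f (x + h)‖ ≤ C * L * |h| := by
    intro x h
    rcases le_total 0 h with hh | hh
    · rw [norm_sub_rev, abs_of_nonneg hh]; exact hlip1 x h hh
    · have := hlip1 (x + h) (-h) (by linarith)
      rw [abs_of_nonpos hh]
      simpa using this
  have hG : ∀ ε : ℝ, 0 < ε → Tendsto (fun x : ℝ => ∫ w, K w * b (x + ε * w)) atTop (𝓝 0) := by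
    intro ε hε
    have hεc : (ε : ℂ) ≠ 0 := by exact_mod_cast hε.ne'
    have h1 := band_limit (b := fun u => b (ε * u)) (C := C) (B := fun z => (ε : ℂ)⁻¹ * B (z / ε))
      (by fun_prop) (fun u => hbC _) (fun u hu => hb0 _ (mul_neg_of_pos_of_neg hε hu))
      (by
        refine continuousOn_const.mul (hBc.comp (by fun_prop) fun z hz => ?_)
        simp only [Set.mem_ofPred_eq, Complex.div_ofReal_re] at hz ⊢
        exact div_nonneg hz hε.le)
      (by
        intro z hz
        rw [← hB (z / ε) (by rw [Complex.div_ofReal_re]; positivity)]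
        have := Measure.integral_comp_mul_left (fun u : ℝ => b u * Complex.exp (-(z / ε) * u)) ε
        rw [abs_of_pos (inv_pos.mpr hε), Complex.real_smul] at this
        rw [Complex.ofReal_inv] at this
        rw [← this]
        congr 1; ext u
        congr 2; push_cast; field_simp)
      hφ hK
    have h2 : Tendsto (fun x : ℝ => x / ε) atTop atTop := tendsto_id.atTop_div_const hε
    refine (h1.comp h2).congr fun x => ?_
    simp only [Function.comp]
    rw [← integral_add_right_eq_self (fun u => K (u - x / ε) * b (ε * u)) (x / ε)]
    congr 1; ext w
    congr 2
    · ring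
    · field_simp; ring
  have hprod : ∀ x ε : ℝ, Integrable (Function.uncurry fun w v : ℝ =>
      K w * (k v * b (x + ε * w - v))) (volume.prod volume) := by
    intro x ε
    have h := hKi.mul_prod hk
    have h2 := h.mul_bdd (c := C) (g := fun p : ℝ × ℝ => b (x + ε * p.1 - p.2))
      (Measurable.aestronglyMeasurable (by fun_prop)) (Eventually.of_forall fun v => hbC _)
    refine h2.congr (Eventually.of_forall fun p => ?_)
    simp only [Function.uncurry]; ring
  have hswap : ∀ x ε : ℝ, ∫ w, K w * f (x + ε * w) =
      ∫ v, k v * ∫ w, K w * b (x - v + ε * w) := by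
    intro x ε
    simp only [hf, ← integral_const_mul]
    rw [integral_integral_swap (hprod x ε)]
    congr 1; ext v; congr 1; ext w
    rw [show x + ε * w - v = x - v + ε * w by ring]; ring
  have hlim : ∀ ε : ℝ, 0 < ε → Tendsto (fun x : ℝ => ∫ w, K w * f (x + ε * w)) atTop (𝓝 0) := by
    intro ε hε
    simp_rw [fun x => hswap x ε]
    rw [show (0 : ℂ) = ∫ v, k v * 0 by simp]
    refine tendsto_integral_filter_of_dominated_convergence
      (fun v => ‖k v‖ * ∫ w, ‖K w‖ * C) ?_ ?_ ?_ ?_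
    · refine Eventually.of_forall fun x => ?_
      refine (hprod x ε).integral_prod_right.aestronglyMeasurable.congr
        (Eventually.of_forall fun v => ?_)
      simp only [Function.uncurry, ← integral_const_mul]
      congr 1; ext w
      rw [show x + ε * w - v = x - v + ε * w by ring]; ring
    · refine Eventually.of_forall fun x => Eventually.of_forall fun v => ?_
      rw [norm_mul]
      refine mul_le_mul_of_nonneg_left ?_ (norm_nonneg _)
      refine norm_integral_le_of_norm_le (hKi.norm.mul_const C) (Eventually.of_forall fun w => ?_)
      rw [norm_mul]
      exact mul_le_mul_of_nonneg_left (hbC _) (norm_nonneg _)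
    · exact hk.norm.mul_const _
    · refine Eventually.of_forall fun v => tendsto_const_nhds.mul ?_
      exact (hG ε hε).comp (tendsto_atTop_add_const_right atTop (-v) tendsto_id)
  set D : ℝ := ∫ w, C * L * (‖w‖ ^ 1 * ‖K w‖) with hD
  have hwK : Integrable fun w : ℝ => C * L * (‖w‖ ^ 1 * ‖K w‖) :=
    (K.integrable_pow_mul volume 1).const_mul _
  have happ : ∀ ε : ℝ, 0 < ε → ∀ x, ‖f x - ∫ w, K w * f (x + ε * w)‖ ≤ ε * D := by
    intro ε hε x
    have hi : Integrable (fun w => K w * f (x + ε * w)) := by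
      refine (hprod x ε).integral_prod_left.congr (Eventually.of_forall fun w => ?_)
      simp only [hf, Function.uncurry, ← integral_const_mul]
    have e1 : f x = ∫ w, K w * f x := by rw [integral_mul_const, hK1, one_mul]
    rw [e1, ← integral_sub (hKi.mul_const _) hi, hD, ← integral_const_mul]
    refine norm_integral_le_of_norm_le (hwK.const_mul ε) (Eventually.of_forall fun w => ?_)
    rw [← mul_sub, norm_mul]
    have := hlip x (ε * w)
    rw [abs_mul, abs_of_pos hε] at this
    calc _ ≤ ‖K w‖ * (C * L * (ε * |w|)) := mul_le_mul_of_nonneg_left this (norm_nonneg _)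
      _ = _ := by rw [Real.norm_eq_abs]; ring
  rw [Metric.tendsto_atTop]
  intro δ hδ
  have hε : 0 < δ / (2 * (|D| + 1)) := by positivity
  obtain ⟨N, hN⟩ := Metric.tendsto_atTop.mp (hlim _ hε) (δ / 2) (by positivity)
  refine ⟨N, fun x hx => ?_⟩
  have h1 := hN x hx
  have h2 := happ _ hε x
  have h3 : δ / (2 * (|D| + 1)) * D ≤ δ / 2 := by
    rw [div_mul_eq_mul_div, div_le_div_iff₀ (by positivity) (by norm_num)]
    nlinarith [le_abs_self D, abs_nonneg D]
  rw [dist_zero_right] at h1 ⊢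
  have h4 := norm_add_le (f x - ∫ w, K w * f (x + δ / (2 * (|D| + 1)) * w))
    (∫ w, K w * f (x + δ / (2 * (|D| + 1)) * w))
  rw [sub_add_cancel] at h4
  linarith

/-- `ψ(e^u)/e^u - 1` for `u ≥ 0`, and zero for `u < 0`. -/
noncomputable def bpsi (u : ℝ) : ℝ :=
  if u < 0 then 0 else Chebyshev.psi (Real.exp u) / Real.exp u - 1

lemma psi_measurable : Measurable Chebyshev.psi := Chebyshev.psi_mono.measurable

lemma bpsi_measurable : Measurable bpsi := by
  have := psi_measurable
  unfold bpsi
  refine Measurable.ite measurableSet_Iio measurable_const (by fun_prop)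

lemma psi_div_bound {y : ℝ} (hy : 0 < y) : |Chebyshev.psi y / y| ≤ Real.log 4 + 4 := by
  rw [abs_of_nonneg (div_nonneg (Chebyshev.psi_nonneg y) hy.le), div_le_iff₀ hy]
  exact Chebyshev.psi_le_const_mul_self hy.le

lemma bpsi_bound (u : ℝ) : |bpsi u| ≤ Real.log 4 + 5 := by
  have h4 : 0 ≤ Real.log 4 := Real.log_nonneg (by norm_num)
  unfold bpsi
  split_ifs
  · simp; linarith
  · have := psi_div_bound (Real.exp_pos u)
    refine (abs_sub _ _).trans ?_
    simp only [abs_one]; linarith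

/-- The continuous extension of the Laplace transform of `bpsi`. -/
noncomputable def Bpsi (z : ℂ) : ℂ :=
  (ArithmeticFunction.vonMangoldt.LFunctionResidueClassAux (1 : ZMod 1) (1 + z) - 1) / (1 + z)

lemma Bpsi_cont : ContinuousOn Bpsi {z | 0 ≤ z.re} := by
  unfold Bpsi
  refine ContinuousOn.div (ContinuousOn.sub ?_ continuousOn_const) (by fun_prop) ?_
  · refine (ArithmeticFunction.vonMangoldt.continuousOn_LFunctionResidueClassAux (1 : ZMod 1)).comp
      (by fun_prop) fun z hz => ?_
    simpa using hz
  · intro z hz h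
    have := congrArg Complex.re h
    simp at this hz
    linarith

lemma LSeries_eq_Bpsi {z : ℂ} (hz : 0 < z.re) :
    LSeries (fun n => ((ArithmeticFunction.vonMangoldt n : ℝ) : ℂ)) (1 + z) =
      ArithmeticFunction.vonMangoldt.LFunctionResidueClassAux (1 : ZMod 1) (1 + z) + 1 / z := by
  have h := ArithmeticFunction.vonMangoldt.eqOn_LFunctionResidueClassAux
    (a := (1 : ZMod 1)) isUnit_one (x := 1 + z) (by simpa using hz)
  rw [h]
  have : (ArithmeticFunction.vonMangoldt.residueClass (1 : ZMod 1)) =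
      fun n => ArithmeticFunction.vonMangoldt n := by
    ext n
    rw [ArithmeticFunction.vonMangoldt.residueClass, Set.indicator_of_mem]
    exact Subsingleton.elim _ _
  rw [this]
  simp

lemma LSeries_eq_integral {z : ℂ} (hz : 0 < z.re) :
    LSeries (fun n => ((ArithmeticFunction.vonMangoldt n : ℝ) : ℂ)) (1 + z) =
      (1 + z) * ∫ u in Set.Ioi (0 : ℝ),
        ((Chebyshev.psi (Real.exp u) / Real.exp u : ℝ) : ℂ) * Complex.exp (-z * u) := by
  have hsum : ∀ n : ℕ, ∑ k ∈ Finset.Icc 1 n, ArithmeticFunction.vonMangoldt k =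
      Chebyshev.psi n := by
    intro n
    simp [Chebyshev.psi, ← Finset.Icc_add_one_left_eq_Ioc]
  rw [LSeries_eq_mul_integral_of_nonneg (fun n => ArithmeticFunction.vonMangoldt n)
    (r := 1) zero_le_one (by simpa using hz) ?_ (fun n => ArithmeticFunction.vonMangoldt_nonneg)]
  · congr 1
    have himg : Real.exp '' Set.Ioi 0 = Set.Ioi 1 := by
      ext y
      constructor
      · rintro ⟨u, hu, rfl⟩
        exact Real.one_lt_exp_iff.mpr hu
      · intro hy
        have hy' : (1 : ℝ) < y := hy
        exact ⟨Real.log y, Real.log_pos hy', Real.exp_log (by linarith)⟩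
    rw [← himg, integral_image_eq_integral_abs_deriv_smul measurableSet_Ioi
      (fun u _ => (Real.hasDerivAt_exp u).hasDerivWithinAt) Real.exp_injective.injOn]
    refine setIntegral_congr_fun measurableSet_Ioi fun u hu => ?_
    rw [← Complex.ofReal_sum, hsum, ← Chebyshev.psi_eq_psi_coe_floor, abs_of_pos (Real.exp_pos u),
      Complex.real_smul, Complex.cpow_def_of_ne_zero (by exact_mod_cast (Real.exp_pos u).ne'),
      ← Complex.ofReal_log (Real.exp_pos u).le, Real.log_exp]
    push_cast
    have hne := Complex.exp_ne_zero (u : ℂ)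
    have : Complex.exp (u * -(1 + z + 1)) * (Complex.exp u * Complex.exp u) =
        Complex.exp (-z * u) := by
      rw [← Complex.exp_add, ← Complex.exp_add]; congr 1; ring
    rw [← this]
    field_simp
  · simp_rw [hsum]
    refine Asymptotics.IsBigO.of_bound (Real.log 4 + 4) (Eventually.of_forall fun n => ?_)
    rw [Real.norm_of_nonneg (Chebyshev.psi_nonneg _), Real.rpow_one,
      Real.norm_of_nonneg (Nat.cast_nonneg n)]
    exact Chebyshev.psi_le_const_mul_self (Nat.cast_nonneg n)

lemma bpsi_laplace (z : ℂ) (hz : 0 < z.re) :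
    ∫ u : ℝ, (bpsi u : ℂ) * Complex.exp (-z * u) = Bpsi z := by
  have hpm := psi_measurable
  have h1 : ∫ u : ℝ, (bpsi u : ℂ) * Complex.exp (-z * u) =
      ∫ u in Set.Ioi (0 : ℝ), (bpsi u : ℂ) * Complex.exp (-z * u) := by
    rw [← integral_Ici_eq_integral_Ioi]
    refine (setIntegral_eq_integral_of_forall_compl_eq_zero fun u hu => ?_).symm
    have : u < 0 := by simpa using hu
    simp [bpsi, this]
  have hE : IntegrableOn (fun u : ℝ => Complex.exp (-z * u)) (Set.Ioi 0) :=
    integrableOn_exp_mul_complex_Ioi (by simpa using hz) 0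
  have hA : IntegrableOn (fun u : ℝ => ((Chebyshev.psi (Real.exp u) / Real.exp u : ℝ) : ℂ) *
      Complex.exp (-z * u)) (Set.Ioi 0) := by
    refine Integrable.bdd_mul (c := Real.log 4 + 4) hE
      (Measurable.aestronglyMeasurable (by fun_prop)) (Eventually.of_forall fun u => ?_)
    rw [Complex.norm_real]
    exact psi_div_bound (Real.exp_pos u)
  have h2 : ∫ u in Set.Ioi (0 : ℝ), (bpsi u : ℂ) * Complex.exp (-z * u) =
      (∫ u in Set.Ioi (0 : ℝ), ((Chebyshev.psi (Real.exp u) / Real.exp u : ℝ) : ℂ) *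
      Complex.exp (-z * u)) - ∫ u in Set.Ioi (0 : ℝ), Complex.exp (-z * u) := by
    rw [← integral_sub hA hE]
    refine setIntegral_congr_fun measurableSet_Ioi fun u hu => ?_
    have : ¬ u < 0 := not_lt.mpr (le_of_lt hu)
    simp only [bpsi, this, if_false]
    push_cast; ring
  have h3 : ∫ u in Set.Ioi (0 : ℝ), Complex.exp (-z * u) = 1 / z := by
    rw [integral_exp_mul_complex_Ioi (by simpa using hz)]
    simp
  have h4 := (LSeries_eq_integral hz).symm.trans (LSeries_eq_Bpsi hz)
  have hz0 : z ≠ 0 := by rintro rfl; simp at hz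
  have hz1 : 1 + z ≠ 0 := by
    intro h
    have := congrArg Complex.re h
    simp at this
    linarith
  rw [h1, h2, h3, Bpsi, eq_div_iff hz1, sub_mul, mul_comm _ (1 + z), h4]
  field_simp
  ring

lemma exp_neg_image : (fun v : ℝ => Real.exp (-v)) '' Set.univ = Set.Ioi 0 := by
  ext y
  constructor
  · rintro ⟨u, _, rfl⟩
    exact Real.exp_pos _
  · intro hy
    exact ⟨-Real.log y, trivial, by simpa using Real.exp_log hy⟩

lemma exp_neg_deriv (v : ℝ) : HasDerivAt (fun v : ℝ => Real.exp (-v)) (-Real.exp (-v)) v := by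
  simpa using (hasDerivAt_neg v).exp

lemma exp_neg_inj : Set.InjOn (fun v : ℝ => Real.exp (-v)) Set.univ := by
  intro a _ b _ h
  simpa using h

lemma integral_cov (g : ℝ → ℝ) :
    ∫ z in Set.Ioi (0 : ℝ), g z = ∫ v : ℝ, Real.exp (-v) * g (Real.exp (-v)) := by
  rw [← exp_neg_image, integral_image_eq_integral_abs_deriv_smul MeasurableSet.univ
    (fun u _ => (exp_neg_deriv u).hasDerivWithinAt) exp_neg_inj, Measure.restrict_univ]
  simp

lemma integrable_cov {g : ℝ → ℝ} (hg : IntegrableOn g (Set.Ioi 0)) :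
    Integrable (fun v : ℝ => Real.exp (-v) * g (Real.exp (-v))) := by
  rw [← exp_neg_image, integrableOn_image_iff_integrableOn_abs_deriv_smul MeasurableSet.univ
    (fun u _ => (exp_neg_deriv u).hasDerivWithinAt) exp_neg_inj, integrableOn_univ] at hg
  simpa using hg

lemma gamma3_integrable : IntegrableOn (fun z : ℝ => z ^ 2 * Real.exp (-z)) (Set.Ioi 0) := by
  have h := Real.GammaIntegral_convergent (s := 3) (by norm_num)
  refine h.congr_fun (fun z hz => ?_) measurableSet_Ioi
  simp only
  rw [show (3 : ℝ) - 1 = (2 : ℕ) by norm_num, Real.rpow_natCast, mul_comm]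

lemma gamma3_integral : ∫ z in Set.Ioi (0 : ℝ), z ^ 2 * Real.exp (-z) = 2 := by
  have h := Real.Gamma_eq_integral (s := 3) (by norm_num)
  have h3 : Real.Gamma 3 = 2 := by
    rw [show (3 : ℝ) = (2 : ℕ) + 1 by norm_num, Real.Gamma_nat_eq_factorial]
    norm_num [Nat.factorial]
  rw [← h3, h]
  refine setIntegral_congr_fun measurableSet_Ioi (fun z hz => ?_)
  rw [show (3 : ℝ) - 1 = (2 : ℕ) by norm_num, Real.rpow_natCast, mul_comm]

/-- The kernel in logarithmic coordinates. -/
noncomputable def kk (v : ℝ) : ℝ :=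
  Real.exp (-v) * (Real.exp (-v) ^ 2 * Real.exp (-Real.exp (-v)))

lemma kk_integrable : Integrable kk := integrable_cov gamma3_integrable

lemma kk_integral : ∫ v, kk v = 2 := by
  rw [← gamma3_integral, integral_cov]; rfl

lemma kk_nonneg (v : ℝ) : 0 ≤ kk v := by unfold kk; positivity

lemma kk_lip (h : ℝ) (hh : 0 ≤ h) : ∫ v, ‖((kk (v + h) : ℝ) : ℂ) - (kk v : ℂ)‖ ≤ 12 * h := by
  set r := Real.exp (-h) ^ 3 with hr
  have hr1 : r ≤ 1 := pow_le_one₀ (Real.exp_pos _).le (by simpa using hh)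
  have hr2 : 1 - r ≤ 3 * h := by
    rw [hr, ← Real.exp_nat_mul]
    have := Real.add_one_le_exp ((3 : ℕ) * -h)
    push_cast at this ⊢
    linarith
  have hmono : ∀ v, r * kk v ≤ kk (v + h) := by
    intro v
    have e1 : kk (v + h) = r * (Real.exp (-v) * (Real.exp (-v) ^ 2 *
        Real.exp (-Real.exp (-(v + h))))) := by
      unfold kk
      rw [hr, show Real.exp (-(v + h)) = Real.exp (-v) * Real.exp (-h) by
        rw [← Real.exp_add]; congr 1; ring]
      ring
    rw [e1]
    unfold kk
    have : Real.exp (-(v + h)) ≤ Real.exp (-v) := Real.exp_le_exp.mpr (by linarith)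
    have hr0 : 0 ≤ r := by positivity
    gcongr
  have hki := kk_integrable
  have hkh := kk_integrable.comp_add_right h
  have i1 : Integrable fun v => kk (v + h) - r * kk v := hkh.sub (hki.const_mul r)
  have i2 : Integrable fun v => (1 - r) * kk v := hki.const_mul _
  calc _ ≤ ∫ v, ((kk (v + h) - r * kk v) + (1 - r) * kk v) := by
        refine integral_mono_of_nonneg (Eventually.of_forall fun v => norm_nonneg _)
          (i1.add i2) (Eventually.of_forall fun v => ?_)
        simp only
        rw [← Complex.ofReal_sub, Complex.norm_real, Real.norm_eq_abs, abs_le]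
        have := hmono v
        have h1 := mul_nonneg (sub_nonneg.mpr hr1) (kk_nonneg v)
        constructor <;> linarith
    _ = (2 - r * 2) + (1 - r) * 2 := by
        rw [integral_add i1 i2, integral_sub hkh (hki.const_mul r), integral_const_mul,
          integral_const_mul, integral_add_right_eq_self kk h, kk_integral]
    _ ≤ 12 * h := by linarith

lemma smoothed_psi : Tendsto
    (fun x : ℝ => ∫ z in Set.Ioi (0 : ℝ), z ^ 2 * Real.exp (-z) * bpsi (x + Real.log z))
    atTop (𝓝 0) := by
  have h := wiener_conv (b := fun u => (bpsi u : ℂ)) (C := Real.log 4 + 5) (B := Bpsi)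
    (Complex.measurable_ofReal.comp bpsi_measurable)
    (fun u => by rw [Complex.norm_real]; exact bpsi_bound u)
    (fun u hu => by simp [bpsi, hu]) Bpsi_cont bpsi_laplace
    (k := fun v => (kk v : ℂ)) kk_integrable.ofReal (L := 12) kk_lip
  have h2 := (Complex.continuous_re.tendsto 0).comp h
  rw [Complex.zero_re] at h2
  refine h2.congr fun x => ?_
  rw [integral_cov]
  simp only [Function.comp, Real.log_exp, ← Complex.ofReal_mul]
  rw [integral_complex_ofReal, Complex.ofReal_re]
  congr 1; ext v
  rw [kk, ← sub_eq_add_neg]; ring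

lemma pi_bound {y : ℝ} (hy : 1 < y) :
    (Nat.primeCounting ⌊y⌋₊ : ℝ) * Real.log y ≤ (2 * Real.log 4 + 2) * y := by
  have h := Chebyshev.pi_le_log4_mul_div hy
  have hl : 0 < Real.log y := Real.log_pos hy
  rw [Real.log_sqrt (by linarith)] at h
  have h1 : Real.log y ≤ 2 * √y := by
    have := Real.log_le_self (Real.sqrt_nonneg y)
    rw [Real.log_sqrt (by linarith)] at this
    linarith
  have h2 := mul_le_mul_of_nonneg_right h hl.le
  have h3 : √y * √y = y := Real.mul_self_sqrt (by linarith)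
  have h4 : (Real.log 4 * y / (Real.log y / 2) + √y) * Real.log y =
      2 * Real.log 4 * y + √y * Real.log y := by
    field_simp
  have h5 := mul_le_mul_of_nonneg_left h1 (Real.sqrt_nonneg y)
  nlinarith

lemma pi_div_tendsto :
    Tendsto (fun y : ℝ => (Nat.primeCounting ⌊y⌋₊ : ℝ) / y) atTop (𝓝 0) := by
  have h1 : Tendsto (fun y : ℝ => (2 * Real.log 4 + 2) / Real.log y) atTop (𝓝 0) :=
    tendsto_const_nhds.div_atTop Real.tendsto_log_atTop
  refine squeeze_zero' ?_ ?_ h1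
  · filter_upwards [eventually_gt_atTop 1] with y hy
    have : 0 < y := by linarith
    positivity
  · filter_upwards [eventually_gt_atTop 1] with y hy
    rw [div_le_div_iff₀ (by linarith) (Real.log_pos hy)]
    exact pi_bound hy

lemma pi_psi_tendsto :
    Tendsto (fun y : ℝ => (Nat.primeCounting ⌊y⌋₊ : ℝ) * Real.log y / y - Chebyshev.psi y / y)
      atTop (𝓝 0) := by
  have h1 : Tendsto (fun y : ℝ => ((Nat.primeCounting ⌊y⌋₊ : ℝ) - Chebyshev.theta y / Real.log y) *
      (Real.log y / y)) atTop (𝓝 0) := by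
    have ho := Chebyshev.primeCounting_sub_theta_div_log_isBigO.mul
      (Asymptotics.isBigO_refl (fun y : ℝ => Real.log y / y) atTop)
    refine ho.trans_tendsto ?_
    refine Tendsto.congr' ?_ Real.tendsto_log_atTop.inv_tendsto_atTop
    filter_upwards [eventually_gt_atTop 1] with y hy
    have := Real.log_pos hy
    have : 0 < y := by linarith
    simp only [Pi.inv_apply]
    field_simp
  have h2 : Tendsto (fun y : ℝ => (Chebyshev.psi y - Chebyshev.theta y) * y⁻¹) atTop (𝓝 0) := by
    have ho := Chebyshev.isBigO_psi_sub_theta_sqrt.mul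
      (Asymptotics.isBigO_refl (fun y : ℝ => y⁻¹) atTop)
    refine ho.trans_tendsto ?_
    refine Tendsto.congr' ?_ Real.tendsto_sqrt_atTop.inv_tendsto_atTop
    filter_upwards [eventually_gt_atTop 1] with y hy
    have : 0 < y := by linarith
    have h3 : √y * √y = y := Real.mul_self_sqrt (by linarith)
    have : 0 < √y := Real.sqrt_pos.mpr this
    simp only [Pi.inv_apply]
    field_simp
    linarith
  have h3 := h1.sub h2
  rw [sub_zero] at h3
  refine h3.congr' ?_
  filter_upwards [eventually_gt_atTop 1] with y hy
  have := Real.log_pos hy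
  have : 0 < y := by linarith
  field_simp
  ring

/-- The difference between the normalized `π` and `ψ` integrands. -/
noncomputable def Ediff (t z : ℝ) : ℝ :=
  z ^ 2 * Real.exp (-z) * (Real.log (1 / t) * ((primePi (z / t) : ℝ) / (z / t)) -
    bpsi (Real.log (1 / t) + Real.log z) - 1)

lemma primePi_measurable : Measurable (fun y : ℝ => (primePi y : ℝ)) := by
  have : Monotone (fun y : ℝ => (primePi y : ℝ)) := by
    intro a b hab
    simp only [primePi]
    exact_mod_cast Nat.monotone_primeCounting (Nat.floor_mono hab)
  exact this.measurable

lemma Ediff_measurable (t : ℝ) : Measurable (Ediff t) := by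
  have h1 := primePi_measurable
  have h2 := bpsi_measurable
  have h3 : Measurable fun z : ℝ => (primePi (z / t) : ℝ) := h1.comp (measurable_id.div_const t)
  unfold Ediff
  fun_prop

lemma primePi_le {y : ℝ} (hy : 0 ≤ y) : (primePi y : ℝ) ≤ y := by
  refine le_trans ?_ (Nat.floor_le hy)
  unfold primePi
  have : Nat.primeCounting ⌊y⌋₊ ≤ ⌊y⌋₊ := by
    rw [← Nat.primesLE_card_eq_primeCounting]
    calc _ ≤ (Finset.Icc 1 ⌊y⌋₊).card := by
          refine Finset.card_le_card fun p hp => ?_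
          have h1 := Nat.prime_of_mem_primesLE hp
          rw [Nat.mem_primesLE] at hp
          exact Finset.mem_Icc.mpr ⟨h1.one_lt.le, hp.1⟩
      _ = _ := by simp
  exact_mod_cast this

lemma Ediff_bound {t z : ℝ} (ht : 0 < t) (ht1 : t < 1) (hz : 0 < z) :
    ‖Ediff t z‖ ≤ (5 * Real.log 4 + 10) * (z ^ 2 * Real.exp (-z)) + Real.exp (-z) := by
  have hL : 0 < Real.log (1 / t) := Real.log_pos (by rw [lt_div_iff₀ ht]; linarith)
  have h4 : 0 < Real.log 4 := Real.log_pos (by norm_num)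
  have hy : 0 < z / t := by positivity
  set P : ℝ := Real.log (1 / t) * ((primePi (z / t) : ℝ) / (z / t)) with hP
  have hP0 : 0 ≤ P := by positivity
  have hPb : z ^ 2 * P ≤ (4 * Real.log 4 + 4) * z ^ 2 + 1 := by
    rcases le_or_gt t (z ^ 2) with hc | hc
    · have h1 : Real.log (1 / t) ≤ 2 * Real.log (z / t) := by
        rw [show 2 * Real.log (z / t) = Real.log ((z / t) ^ 2) by rw [Real.log_pow]; norm_num]
        refine Real.log_le_log (by positivity) ?_
        rw [div_pow, div_le_div_iff₀ ht (by positivity)]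
        nlinarith
      have h2 : 1 < z / t := by
        by_contra hcon
        have := Real.log_nonpos hy.le (not_lt.mp hcon)
        linarith
      have h3 : P ≤ 4 * Real.log 4 + 4 := by
        rw [hP, ← mul_div_assoc, div_le_iff₀ hy]
        have := pi_bound h2
        have h5 : Real.log (1 / t) * (primePi (z / t) : ℝ) ≤
          2 * Real.log (z / t) * (primePi (z / t) : ℝ) :=
          mul_le_mul_of_nonneg_right h1 (Nat.cast_nonneg _)
        have h6 : (primePi (z / t) : ℝ) = (Nat.primeCounting ⌊z / t⌋₊ : ℝ) := rfl
        rw [h6] at h5 ⊢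
        linarith
      nlinarith [sq_nonneg z]
    · have h1 : P ≤ Real.log (1 / t) :=
        mul_le_of_le_one_right hL.le ((div_le_one hy).mpr (primePi_le hy.le))
      have h2 : Real.log (1 / t) ≤ 1 / t := Real.log_le_self (by positivity)
      have h3 : z ^ 2 * P ≤ t * (1 / t) :=
        mul_le_mul hc.le (h1.trans h2) hP0 ht.le
      rw [mul_one_div_cancel ht.ne'] at h3
      have : 0 ≤ (4 * Real.log 4 + 4) * z ^ 2 := by positivity
      linarith
  have hb := bpsi_bound (Real.log (1 / t) + Real.log z)
  have hD : |P - bpsi (Real.log (1 / t) + Real.log z) - 1| ≤ P + (Real.log 4 + 6) := by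
    rw [abs_le] at hb ⊢
    constructor <;> linarith [hb.1, hb.2]
  have he : 0 < Real.exp (-z) := Real.exp_pos _
  rw [Ediff, Real.norm_eq_abs, abs_mul, abs_of_nonneg (by positivity : 0 ≤ z ^ 2 * Real.exp (-z))]
  calc _ ≤ z ^ 2 * Real.exp (-z) * (P + (Real.log 4 + 6)) :=
        mul_le_mul_of_nonneg_left hD (by positivity)
    _ = (z ^ 2 * P + (Real.log 4 + 6) * z ^ 2) * Real.exp (-z) := by ring
    _ ≤ ((5 * Real.log 4 + 10) * z ^ 2 + 1) * Real.exp (-z) :=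
        mul_le_mul_of_nonneg_right (by linarith) he.le
    _ = _ := by ring

lemma Edom_integrable : IntegrableOn
    (fun z : ℝ => (5 * Real.log 4 + 10) * (z ^ 2 * Real.exp (-z)) + Real.exp (-z))
    (Set.Ioi 0) :=
  (gamma3_integrable.const_mul _).add (integrableOn_exp_neg_Ioi 0)

lemma Ediff_integrable {t : ℝ} (ht : 0 < t) (ht1 : t < 1) :
    IntegrableOn (Ediff t) (Set.Ioi 0) := by
  refine Integrable.mono' Edom_integrable (Ediff_measurable t).aestronglyMeasurable ?_
  exact (ae_restrict_mem measurableSet_Ioi).mono fun z hz => Ediff_bound ht ht1 hz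

lemma Ediff_pointwise {z : ℝ} (hz : 0 < z) : Tendsto (fun t => Ediff t z) (𝓝[>] 0) (𝓝 0) := by
  have hy : Tendsto (fun t : ℝ => z / t) (𝓝[>] 0) atTop := by
    simp_rw [div_eq_mul_inv]
    exact tendsto_inv_nhdsGT_zero.const_mul_atTop hz
  have h1 := pi_psi_tendsto.comp hy
  have h2 := (pi_div_tendsto.comp hy).const_mul (Real.log z)
  have h3 := ((h1.sub h2).const_mul (z ^ 2 * Real.exp (-z)))
  simp only [mul_zero, sub_zero] at h3
  refine h3.congr' ?_
  filter_upwards [self_mem_nhdsWithin, hy.eventually_ge_atTop 1] with t ht hy1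
  have ht : 0 < t := ht
  have hlog : Real.log (1 / t) + Real.log z = Real.log (z / t) := by
    rw [← Real.log_mul (by positivity) hz.ne']; congr 1; ring
  have hlog2 : Real.log (1 / t) = Real.log (z / t) - Real.log z := by linarith
  have hb : bpsi (Real.log (z / t)) = Chebyshev.psi (z / t) / (z / t) - 1 := by
    rw [bpsi, if_neg (not_lt.mpr (Real.log_nonneg hy1)), Real.exp_log (by positivity)]
  simp only [Function.comp]
  rw [Ediff, hlog, hb, hlog2, primePi]
  ring

lemma Ediff_tendsto : Tendsto (fun t => ∫ z in Set.Ioi (0 : ℝ), Ediff t z) (𝓝[>] 0) (𝓝 0) := by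
  rw [show (0 : ℝ) = ∫ z in Set.Ioi (0 : ℝ), (0 : ℝ) by simp]
  simp only [integral_zero]
  rw [show 𝓝 (0 : ℝ) = 𝓝 (∫ z in Set.Ioi (0 : ℝ), (0 : ℝ)) by simp]
  refine tendsto_integral_filter_of_dominated_convergence _ ?_ ?_ Edom_integrable ?_
  · exact Eventually.of_forall fun t => (Ediff_measurable t).aestronglyMeasurable
  · filter_upwards [self_mem_nhdsWithin, nhdsWithin_le_nhds (Iio_mem_nhds (zero_lt_one' ℝ))]
      with t ht ht1
    exact (ae_restrict_mem measurableSet_Ioi).mono fun z hz => Ediff_bound ht ht1 hz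
  · exact (ae_restrict_mem measurableSet_Ioi).mono fun z hz => Ediff_pointwise hz

lemma Ifun_rescale {t : ℝ} (ht : 0 < t) : Ifun t * (t ^ 2 * Real.log (1 / t)) =
    ∫ z in Set.Ioi (0 : ℝ), z ^ 2 * Real.exp (-z) *
      (Real.log (1 / t) * ((primePi (z / t) : ℝ) / (z / t))) := by
  have h := integral_comp_mul_left_Ioi' (fun y : ℝ => y * Real.exp (-(y * t)) * (primePi y : ℝ)) 0
    (inv_pos.mpr ht)
  rw [mul_zero] at h
  rw [Ifun, ← h, smul_eq_mul, ← integral_const_mul, ← integral_const_mul, ← integral_mul_const]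
  refine setIntegral_congr_fun measurableSet_Ioi fun z hz => ?_
  have hz : 0 < z := hz
  rw [show t⁻¹ * z * t = z by field_simp, show t⁻¹ * z = z / t by field_simp]
  field_simp

/-- `I(t) ~ 2/(t²·log(1/t))` as `t → 0⁺`. -/
theorem Ifun_asymptotic :
    Tendsto (fun t : ℝ => Ifun t * (t ^ 2 * Real.log (1 / t)))
      (𝓝[>] 0) (𝓝 2) := by
  have hx : Tendsto (fun t : ℝ => Real.log (1 / t)) (𝓝[>] 0) atTop := by
    simp_rw [one_div]
    exact Real.tendsto_log_atTop.comp tendsto_inv_nhdsGT_zero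
  have h := (Ediff_tendsto.add (smoothed_psi.comp hx)).add
    (tendsto_const_nhds (x := (2 : ℝ)))
  rw [zero_add, zero_add] at h
  refine h.congr' ?_
  filter_upwards [self_mem_nhdsWithin, nhdsWithin_le_nhds (Iio_mem_nhds (zero_lt_one' ℝ))]
    with t ht ht1
  have i2 : IntegrableOn (fun z : ℝ => z ^ 2 * Real.exp (-z) *
      bpsi (Real.log (1 / t) + Real.log z)) (Set.Ioi 0) := by
    have hm := bpsi_measurable
    refine Integrable.mul_bdd (c := Real.log 4 + 5) gamma3_integrable
      (Measurable.aestronglyMeasurable (by fun_prop)) (Eventually.of_forall fun z => bpsi_bound _)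
  rw [Ifun_rescale ht, ← gamma3_integral]
  simp only [Function.comp]
  have i12 := (Ediff_integrable ht ht1).add i2
  rw [← integral_add (Ediff_integrable ht ht1) i2]
  refine (integral_add i12 gamma3_integrable).symm.trans ?_
  refine setIntegral_congr_fun measurableSet_Ioi fun z hz => ?_
  simp only [Pi.add_apply, Ediff]
  ring
end
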